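/- arXiv:2511.13149 — 2 statements merged into one kernel-verified Lean document; each statement's English description precedes it below -/
import Mathlib

section
/- The common first-order theory of free lattices is undecidable: the set of sentences in the language of posets that are true in every free lattice (i.e., true in the free lattice on X for every nonempty set X) is not decidable. -/
open FirstOrder FirstOrder.Language

attribute [local instance] FirstOrder.Language.orderStructure

universe u u' v v' w w'

/-! ### A fixed computable Gödel encoding of sentences in the language of posets -/

instance (n : ℕ) : Encodable (Language.order.Functions n) := inferInstanceAs (Encodable Empty)

instance : Encodable (Σ i, Language.order.Functions i) := Sigma.encodable

instance : Encodable (Σ n, Language.order.Relations n) :=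
  Encodable.ofEquiv Unit (Equiv.equivPUnit.{1,1} _)

instance : Encodable (Σ n, Language.order.BoundedFormula Empty n) :=
  Encodable.ofLeftInjection
    (fun φ => φ.2.listEncode)
    (fun l => (BoundedFormula.listDecode l)[0]?)
    BoundedFormula.encoding.decode_encode

instance : Encodable Language.order.Sentence :=
  Encodable.ofLeftInjection (fun φ => (⟨0, φ⟩ : Σ n, Language.order.BoundedFormula Empty n))
    (fun ψ => match ψ with | ⟨0, φ⟩ => some φ | _ => none)
    (fun _ => rfl)

/-! ### Free lattices, bipartite posets, join covers -/

/-- `ι : X → F` realizes `F` as a free lattice on the set `X`: every map from `X`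
to a lattice extends uniquely to a lattice homomorphism on `F`. -/
def IsFreeLatticeOn {X : Type u} {F : Type v} [Lattice F] (ι : X → F) : Prop :=
  ∀ (L : Type w) [Lattice L] (f : X → L), ∃! h : LatticeHom F L, ∀ x : X, h (ι x) = f x

/-- A bipartite poset: every element is maximal or minimal. -/
def IsBipartitePoset (Q : Type*) [PartialOrder Q] : Prop :=
  ∀ q : Q, IsMax q ∨ IsMin q

/-- A nice bipartite poset (the maximal elements form the top part `A`, the
non-maximal (hence minimal) elements the bottom part `B`): both parts have at
least three elements, every `a ∈ A` is strictly above at least two elements of `B`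
and fails to be above at least one element of `B`, and dually for `B`. -/
def IsNiceBipartitePoset (Q : Type*) [PartialOrder Q] : Prop :=
  IsBipartitePoset Q ∧
  (∃ a₁ a₂ a₃ : Q, IsMax a₁ ∧ IsMax a₂ ∧ IsMax a₃ ∧ a₁ ≠ a₂ ∧ a₁ ≠ a₃ ∧ a₂ ≠ a₃) ∧
  (∃ b₁ b₂ b₃ : Q, ¬IsMax b₁ ∧ ¬IsMax b₂ ∧ ¬IsMax b₃ ∧ b₁ ≠ b₂ ∧ b₁ ≠ b₃ ∧ b₂ ≠ b₃) ∧
  (∀ a : Q, IsMax a →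
    (∃ b₁ b₂ : Q, ¬IsMax b₁ ∧ ¬IsMax b₂ ∧ b₁ ≠ b₂ ∧ b₁ < a ∧ b₂ < a) ∧
    (∃ b : Q, ¬IsMax b ∧ ¬ b ≤ a)) ∧
  (∀ b : Q, ¬IsMax b →
    (∃ a₁ a₂ : Q, IsMax a₁ ∧ IsMax a₂ ∧ a₁ ≠ a₂ ∧ b < a₁ ∧ b < a₂) ∧
    (∃ a : Q, IsMax a ∧ ¬ b ≤ a))

section JoinCovers

variable {L : Type*} [Lattice L]

/-- `S` is a join cover of `p`: a finite (nonempty) subset with `p ≤ sup S`. -/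
def IsJoinCover (p : L) (S : Finset L) : Prop :=
  ∃ hS : S.Nonempty, p ≤ S.sup' hS id

/-- A join cover is nontrivial if `p ≰ s` for every `s ∈ S`. -/
def IsNontrivialJoinCover (p : L) (S : Finset L) : Prop :=
  IsJoinCover p S ∧ ∀ s ∈ S, ¬ p ≤ s

/-- `S` refines `T` if every element of `S` lies below some element of `T`. -/
def FinsetRefines (S T : Finset L) : Prop :=
  ∀ s ∈ S, ∃ t ∈ T, s ≤ t

/-- A join cover `S` of `p` is minimal if every join cover of `p` refining `S` contains `S`. -/
def IsMinimalJoinCover (p : L) (S : Finset L) : Prop :=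
  IsJoinCover p S ∧ ∀ T : Finset L, IsJoinCover p T → FinsetRefines T S → S ⊆ T

/-- A join cover `S` of `p` is doubly minimal if it is minimal, nontrivial, and any
nontrivial join cover of `p` whose join is below the join of `S` has the same join. -/
def IsDoublyMinimalJoinCover (p : L) (S : Finset L) : Prop :=
  IsMinimalJoinCover p S ∧ IsNontrivialJoinCover p S ∧
  ∀ (T : Finset L) (hT : T.Nonempty) (hS : S.Nonempty), IsNontrivialJoinCover p T →
    T.sup' hT id ≤ S.sup' hS id → T.sup' hT id = S.sup' hS id

/-- `ERel p q` : `p ≠ q` and `q` belongs to some doubly minimal join cover of `p`. -/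
def ERel (p q : L) : Prop :=
  p ≠ q ∧ ∃ S : Finset L, IsDoublyMinimalJoinCover p S ∧ q ∈ S

/-- A subset `Y` of a lattice is independent if no member is below the join, nor above
the meet, of a finite nonempty subset of `Y` not containing it. -/
def IsIndependentSubset (Y : Set L) : Prop :=
  ∀ y ∈ Y, ∀ Z : Finset L, ↑Z ⊆ Y \ {y} → ∀ hZ : Z.Nonempty,
    ¬ y ≤ Z.sup' hZ id ∧ ¬ Z.inf' hZ id ≤ y

end JoinCovers

/-- The standard embedding `ξ` of a finite poset `Q`, included in a set `X` via `j`, into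
a lattice `F` equipped with `ι : X → F`: `ξ q = inf { ι (j q') : q' ∈ Q, q' ≥ q }`. -/
noncomputable def xiMap {Q : Type u} [PartialOrder Q] [Fintype Q] {X : Type u'} (j : Q → X)
    {F : Type v} [Lattice F] (ι : X → F) (q : Q) : F := by
  classical
  exact (Finset.univ.filter fun q' : Q => q ≤ q').inf'
    ⟨q, Finset.mem_filter.mpr ⟨Finset.mem_univ q, le_refl q⟩⟩ fun q' => ι (j q')

/-- The word `w_Q` associated to a finite nice bipartite poset `Q`:
`w_Q = ⋀_{a ∈ max Q} (ξ a ⊔ ⋁ { ξ b : b ∈ min Q, b ≰ a })`. -/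
noncomputable def wQ {Q : Type u} [PartialOrder Q] [Fintype Q] {X : Type u'} (j : Q → X)
    {F : Type v} [Lattice F] (ι : X → F) (hQ : IsNiceBipartitePoset Q) : F := by
  classical
  have hA : (Finset.univ.filter fun a : Q => IsMax a).Nonempty := by
    obtain ⟨a₁, -, -, h₁, -⟩ := hQ.2.1
    exact ⟨a₁, Finset.mem_filter.mpr ⟨Finset.mem_univ _, h₁⟩⟩
  have hB : ∀ a : Q, (Finset.univ.filter fun b : Q => ¬ IsMax b ∧ ¬ b ≤ a).Nonempty := by
    intro a
    by_cases hmax : IsMax a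
    · obtain ⟨b, hb1, hb2⟩ := (hQ.2.2.2.1 a hmax).2
      exact ⟨b, Finset.mem_filter.mpr ⟨Finset.mem_univ _, hb1, hb2⟩⟩
    · have hmin : IsMin a := (hQ.1 a).resolve_left hmax
      obtain ⟨b₁, b₂, b₃, h1, h2, h3, h12, h13, h23⟩ := hQ.2.2.1
      rcases eq_or_ne b₁ a with rfl | hne
      · refine ⟨b₂, Finset.mem_filter.mpr ⟨Finset.mem_univ _, h2, fun hle => ?_⟩⟩
        exact h12 (le_antisymm (hmin hle) hle)
      · refine ⟨b₁, Finset.mem_filter.mpr ⟨Finset.mem_univ _, h1, fun hle => ?_⟩⟩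
        exact hne (le_antisymm hle (hmin hle))
  exact (Finset.univ.filter fun a : Q => IsMax a).inf' hA fun a =>
    xiMap j ι a ⊔
      (Finset.univ.filter fun b : Q => ¬ IsMax b ∧ ¬ b ≤ a).sup' (hB a) (xiMap j ι)

/-- Universally quantify the last `l` (de Bruijn) variables of a bounded formula. -/
def BoundedFormula.allsLast {L : Language} {α : Type*} :
    ∀ {n : ℕ} (l : ℕ), L.BoundedFormula α (n + l) → L.BoundedFormula α n
  | _, 0, ψ => ψ
  | _, l + 1, ψ => BoundedFormula.allsLast l ψ.all

/-- An `∃∀`-sentence in the language of posets: a sentence of the form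
`∃ x₁ … x_k ∀ y₁ … y_l, ψ` with `ψ` quantifier-free. -/
def IsEASentence (φ : Language.order.Sentence) : Prop :=
  ∃ (k l : ℕ) (ψ : Language.order.BoundedFormula Empty (k + l)),
    ψ.IsQF ∧ φ = (BoundedFormula.allsLast l ψ).exs

/-! ### The free lattice on a type -/

/-- Lattice terms over a set of generators. -/
inductive LatticeTerm (G : Type) : Type v
  | of (g : G) : LatticeTerm G
  | sup (a b : LatticeTerm G) : LatticeTerm G
  | inf (a b : LatticeTerm G) : LatticeTerm G

namespace LatticeTerm

variable {G : Type}

/-- The least preorder on lattice terms for which `sup` and `inf` are joins and meets. -/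
inductive Le : LatticeTerm.{v} G → LatticeTerm.{v} G → Prop
  | refl (a) : Le a a
  | trans {a b c} : Le a b → Le b c → Le a c
  | left_sup (a b) : Le a (sup a b)
  | right_sup (a b) : Le b (sup a b)
  | sup_le {a b c} : Le a c → Le b c → Le (sup a b) c
  | inf_left (a b) : Le (inf a b) a
  | inf_right (a b) : Le (inf a b) b
  | le_inf {a b c} : Le a b → Le a c → Le a (inf b c)

/-- Mutual inequality of lattice terms. -/
def setoid (G : Type) : Setoid (LatticeTerm.{v} G) where
  r a b := Le a b ∧ Le b a
  iseqv := ⟨fun a => ⟨.refl a, .refl a⟩, fun h => ⟨h.2, h.1⟩,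
    fun h h' => ⟨h.1.trans h'.1, h'.2.trans h.2⟩⟩

/-- Evaluation of a lattice term. -/
def eval {L : Type*} [Lattice L] (f : G → L) : LatticeTerm.{v} G → L
  | of g => f g
  | sup a b => eval f a ⊔ eval f b
  | inf a b => eval f a ⊓ eval f b

theorem Le.eval_le {L : Type*} [Lattice L] (f : G → L) {a b : LatticeTerm.{v} G} (h : Le a b) :
    a.eval f ≤ b.eval f := by
  induction h with
  | refl => exact le_rfl
  | trans _ _ h₁ h₂ => exact h₁.trans h₂
  | left_sup => exact le_sup_left
  | right_sup => exact le_sup_right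
  | sup_le _ _ h₁ h₂ => exact _root_.sup_le h₁ h₂
  | inf_left => exact inf_le_left
  | inf_right => exact inf_le_right
  | le_inf _ _ h₁ h₂ => exact _root_.le_inf h₁ h₂

end LatticeTerm

/-- The free lattice on the type `G`. -/
def FreeLat (G : Type) : Type v := Quotient (LatticeTerm.setoid.{v} G)

namespace FreeLat

open LatticeTerm

variable {G : Type}

instance : Lattice (FreeLat.{v} G) where
  le a b := Quotient.liftOn₂ a b Le fun _ _ _ _ h h' =>
    propext ⟨fun k => h.2.trans (k.trans h'.1), fun k => h.1.trans (k.trans h'.2)⟩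
  sup := Quotient.map₂ LatticeTerm.sup fun _ _ h _ _ h' =>
    ⟨.sup_le (h.1.trans (.left_sup _ _)) (h'.1.trans (.right_sup _ _)),
      .sup_le (h.2.trans (.left_sup _ _)) (h'.2.trans (.right_sup _ _))⟩
  inf := Quotient.map₂ LatticeTerm.inf fun _ _ h _ _ h' =>
    ⟨.le_inf (.trans (.inf_left _ _) h.1) (.trans (.inf_right _ _) h'.1),
      .le_inf (.trans (.inf_left _ _) h.2) (.trans (.inf_right _ _) h'.2)⟩
  le_refl a := Quotient.inductionOn a Le.refl
  le_trans a b c := Quotient.inductionOn₃ a b c fun _ _ _ => Le.trans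
  le_antisymm a b := Quotient.inductionOn₂ a b fun _ _ h h' => Quotient.sound ⟨h, h'⟩
  le_sup_left a b := Quotient.inductionOn₂ a b Le.left_sup
  le_sup_right a b := Quotient.inductionOn₂ a b Le.right_sup
  sup_le a b c := Quotient.inductionOn₃ a b c fun _ _ _ => Le.sup_le
  inf_le_left a b := Quotient.inductionOn₂ a b Le.inf_left
  inf_le_right a b := Quotient.inductionOn₂ a b Le.inf_right
  le_inf a b c := Quotient.inductionOn₃ a b c fun _ _ _ => Le.le_inf

/-- The generators of the free lattice. -/
def of (g : G) : FreeLat.{v} G := Quotient.mk _ (LatticeTerm.of g)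

theorem induction_on {p : FreeLat.{v} G → Prop} (t : FreeLat.{v} G) (of : ∀ g, p (of g))
    (sup : ∀ a b, p a → p b → p (a ⊔ b)) (inf : ∀ a b, p a → p b → p (a ⊓ b)) : p t := by
  induction t using Quotient.inductionOn with | h t =>
  induction t with
  | of g => exact of g
  | sup a b ha hb => exact sup _ _ ha hb
  | inf a b ha hb => exact inf _ _ ha hb

/-- The extension of a map on the generators to a lattice homomorphism. -/
def lift {L : Type*} [Lattice L] (f : G → L) : LatticeHom (FreeLat.{v} G) L where
  toFun t := Quotient.liftOn t (LatticeTerm.eval f) fun _ _ h =>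
    le_antisymm (h.1.eval_le f) (h.2.eval_le f)
  map_sup' a b := Quotient.inductionOn₂ a b fun _ _ => rfl
  map_inf' a b := Quotient.inductionOn₂ a b fun _ _ => rfl

@[simp]
theorem lift_of {L : Type*} [Lattice L] (f : G → L) (g : G) : lift f (of.{v} g) = f g := rfl

theorem isFreeLatticeOn :
    IsFreeLatticeOn.{u, v, w} fun x : ULift.{u} G => (of x.down : FreeLat.{v} G) := by
  intro L _ f
  refine ⟨lift fun g => f ⟨g⟩, fun x => rfl, fun h hh => LatticeHom.ext fun t => ?_⟩
  induction t using induction_on with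
  | of g => exact hh ⟨g⟩
  | sup a b ha hb => rw [map_sup, map_sup, ha, hb]
  | inf a b ha hb => rw [map_inf, map_inf, ha, hb]

theorem of_le_iff_lift (g : G) (t : FreeLat.{v} G) : of g ≤ t ↔ lift (fun x => x = g) t := by
  constructor
  · intro h
    exact (OrderHomClass.mono (lift fun x => x = g) h : _ → _) rfl
  · induction t using induction_on with
    | of x => rintro rfl; exact le_rfl
    | sup a b ha hb =>
      rw [map_sup]
      exact fun h => h.elim (fun h => (ha h).trans le_sup_left) fun h => (hb h).trans le_sup_right
    | inf a b ha hb =>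
      rw [map_inf]
      exact fun h => le_inf (ha h.1) (hb h.2)

theorem le_of_iff_lift (g : G) (t : FreeLat.{v} G) : t ≤ of g ↔ ¬ lift (fun x => x ≠ g) t := by
  constructor
  · intro h h'
    exact (OrderHomClass.mono (lift fun x => x ≠ g) h : _ → _) h' rfl
  · induction t using induction_on with
    | of x => intro h; rw [not_not.1 h]
    | sup a b ha hb =>
      rw [map_sup]
      exact fun h => sup_le (ha fun h' => h (.inl h')) (hb fun h' => h (.inr h'))
    | inf a b ha hb =>
      rw [map_inf]
      intro h
      by_cases h' : lift (fun x => x ≠ g) a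
      · exact inf_le_right.trans (hb fun h'' => h ⟨h', h''⟩)
      · exact inf_le_left.trans (ha h')

theorem of_le_of {g g' : G} : (of g : FreeLat.{v} G) ≤ of g' ↔ g = g' :=
  of_le_iff_lift g _ |>.trans eq_comm

theorem of_injective : Function.Injective (of : G → FreeLat.{v} G) :=
  fun _ _ h => of_le_of.1 h.le

end FreeLat

/-- `JoinCovers w x y` says that `w ≤ x ⊔ y`, in terms of the order only. -/
def JoinCovers {M : Type*} [LE M] (w x y : M) : Prop :=
  ∀ u, x ≤ u → y ≤ u → w ≤ u

/-- `x` is both join prime and meet prime, in terms of the order only. -/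
def DoublyPrime {M : Type*} [LE M] (x : M) : Prop :=
  (∀ a b, JoinCovers x a b → x ≤ a ∨ x ≤ b) ∧
  (∀ a b, (∀ u, u ≤ a → u ≤ b → u ≤ x) → a ≤ x ∨ b ≤ x)

theorem joinCovers_iff {M : Type*} [Lattice M] {w x y : M} : JoinCovers w x y ↔ w ≤ x ⊔ y :=
  ⟨fun h => h _ le_sup_left le_sup_right, fun h _ hx hy => h.trans (sup_le hx hy)⟩

namespace FreeLat

variable {G : Type}

theorem doublyPrime_iff {x : FreeLat.{v} G} : DoublyPrime x ↔ ∃ g, x = of g := by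
  constructor
  · intro h
    induction x using induction_on with
    | of g => exact ⟨g, rfl⟩
    | sup a b ha hb =>
      rcases h.1 a b (joinCovers_iff.2 le_rfl) with h' | h'
      · rw [le_antisymm h' le_sup_left] at h ⊢
        exact ha h
      · rw [le_antisymm h' le_sup_right] at h ⊢
        exact hb h
    | inf a b ha hb =>
      rcases h.2 a b (fun u => le_inf) with h' | h'
      · rw [le_antisymm inf_le_left h'] at h ⊢
        exact ha h
      · rw [le_antisymm inf_le_right h'] at h ⊢
        exact hb h
  · rintro ⟨g, rfl⟩
    constructor
    · intro a b h
      rw [joinCovers_iff, of_le_iff_lift, map_sup] at h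
      rwa [of_le_iff_lift, of_le_iff_lift]
    · intro a b h
      have := h _ inf_le_left inf_le_right
      rw [le_of_iff_lift, map_inf] at this
      rw [le_of_iff_lift, le_of_iff_lift]
      exact not_and_or.1 this

/-- A finite nonempty graph on the generators is coded by a single element. -/
theorem exists_code_edges {α : Type*} (S : Finset α) (hS : S.Nonempty) (f f' : α → G) :
    ∃ w : FreeLat.{v} G, ∀ x y, JoinCovers w (of x) (of y) ↔
      ∃ s ∈ S, (f s = x ∨ f s = y) ∧ (f' s = x ∨ f' s = y) := by
  refine ⟨S.inf' hS fun s => of (f s) ⊔ of (f' s), fun x y => ?_⟩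
  rw [joinCovers_iff]
  constructor
  · intro h
    by_contra! hc
    have := (OrderHomClass.mono (lift fun g => g ≠ x ∧ g ≠ y) h : _ → _)
    rw [map_finset_inf', map_sup, lift_of, lift_of] at this
    refine absurd (this ?_) ?_
    · refine (?_ : True ≤ _) trivial
      refine Finset.le_inf' _ _ fun s hs _ => ?_
      change lift _ (of (f s) ⊔ of (f' s))
      rw [map_sup, lift_of, lift_of]
      have := hc s hs
      change (_ ∧ _) ∨ (_ ∧ _)
      grind
    · rintro (h | h)
      · exact h.1 rfl
      · exact h.2 rfl
  · rintro ⟨s, hs, h, h'⟩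
    refine (Finset.inf'_le _ hs).trans (sup_le ?_ ?_)
    · rcases h with h | h <;> simp [h]
    · rcases h' with h | h <;> simp [h]

/-- A finite nonempty set of generators is coded by a single element. -/
theorem exists_code_set {α : Type*} (S : Finset α) (hS : S.Nonempty) (f : α → G) :
    ∃ d : FreeLat.{v} G, ∀ x, of x ≤ d ↔ ∃ s ∈ S, f s = x := by
  refine ⟨S.sup' hS fun s => of (f s), fun x => ⟨fun h => ?_, ?_⟩⟩
  · by_contra! hc
    rw [of_le_iff_lift, map_finset_sup'] at h
    refine (?_ : _ ≤ False) h
    exact Finset.sup'_le _ _ fun s hs => hc s hs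
  · rintro ⟨s, hs, rfl⟩
    exact Finset.le_sup' (fun s => of (f s)) hs

end FreeLat

/-! ### Rewriting of binary trees -/

/-- Binary trees. -/
inductive BTree
  | leaf
  | node (a b : BTree)

/-- Patterns for binary trees, with at most five variables. -/
inductive BPat
  | var (i : Fin 5)
  | leaf
  | node (a b : BPat)

namespace BPat

/-- Substitution of trees for the variables of a pattern. -/
def subst (σ : Fin 5 → BTree) : BPat → BTree
  | var i => σ i
  | leaf => .leaf
  | node a b => .node (a.subst σ) (b.subst σ)

/-- The variables of a pattern. -/
def vars : BPat → List (Fin 5)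
  | var i => [i]
  | leaf => []
  | node a b => a.vars ++ b.vars

/-- A sufficient condition for two patterns to have no common instance. -/
def clash : BPat → BPat → Bool
  | leaf, node _ _ => true
  | node _ _, leaf => true
  | node a b, node a' b' => clash a a' || clash b b'
  | _, _ => false

theorem subst_ne_of_clash {p q : BPat} (h : clash p q = true) (σ τ : Fin 5 → BTree) :
    p.subst σ ≠ q.subst τ := by
  induction p generalizing q with
  | var i => simp [clash] at h
  | leaf => cases q <;> simp_all [clash, subst]
  | node a b ha hb =>
    cases q with
    | var i => simp [clash] at h
    | leaf => simp [subst]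
    | node a' b' =>
      simp only [clash, Bool.or_eq_true] at h
      intro e
      simp only [subst, BTree.node.injEq] at e
      exact h.elim (fun h => ha h e.1) fun h => hb h e.2

theorem subst_eq_iff {p : BPat} {σ τ : Fin 5 → BTree} :
    p.subst σ = p.subst τ ↔ ∀ i ∈ p.vars, σ i = τ i := by
  induction p with
  | var i => simp [subst, vars]
  | leaf => simp [subst, vars]
  | node a b ha hb => simp only [subst, vars, BTree.node.injEq, ha, hb, List.mem_append]; grind

/-- The unary numeral `n`. -/
def num : ℕ → BPat
  | 0 => leaf
  | n + 1 => node leaf (num n)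

/-- The pattern of a configuration about to evaluate the code `c` on `v`, with continuation `k`. -/
def evalCfg (c k v : BPat) : BPat := node leaf (node c (node k v))

/-- The pattern of a configuration returning the value `v` to the continuation `k`. -/
def retCfg (k v : BPat) : BPat := node (node leaf leaf) (node k v)

/-- The rewriting rules of an interpreter for `Turing.ToPartrec.Code`. -/
def rules : List (BPat × BPat) :=
  [(evalCfg (node (num 0) leaf) (var 0) (var 1), retCfg (var 0) (node leaf (var 1))),
   (evalCfg (node (num 1) leaf) (var 0) leaf, retCfg (var 0) (node (node leaf leaf) leaf)),
   (evalCfg (node (num 1) leaf) (var 0) (node (var 1) (var 2)),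
    retCfg (var 0) (node (node leaf (var 1)) leaf)),
   (evalCfg (node (num 2) leaf) (var 0) leaf, retCfg (var 0) leaf),
   (evalCfg (node (num 2) leaf) (var 0) (node (var 1) (var 2)), retCfg (var 0) (var 2)),
   (evalCfg (node (num 3) (node (var 0) (var 1))) (var 2) (var 3),
    evalCfg (var 0) (node (num 1) (node (var 1) (node (var 3) (var 2)))) (var 3)),
   (evalCfg (node (num 4) (node (var 0) (var 1))) (var 2) (var 3),
    evalCfg (var 1) (node (num 3) (node (var 0) (var 2))) (var 3)),
   (evalCfg (node (num 5) (node (var 0) (var 1))) (var 2) leaf, evalCfg (var 0) (var 2) leaf),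
   (evalCfg (node (num 5) (node (var 0) (var 1))) (var 2) (node leaf (var 3)),
    evalCfg (var 0) (var 2) (var 3)),
   (evalCfg (node (num 5) (node (var 0) (var 1))) (var 2) (node (node leaf (var 3)) (var 4)),
    evalCfg (var 1) (var 2) (node (var 3) (var 4))),
   (evalCfg (node (num 6) (var 0)) (var 1) (var 2),
    evalCfg (var 0) (node (num 4) (node (var 0) (var 1))) (var 2)),
   (retCfg (node (num 1) (node (var 0) (node (var 1) (var 2)))) (var 3),
    evalCfg (var 0) (node (num 2) (node (var 3) (var 2))) (var 1)),
   (retCfg (node (num 2) (node leaf (var 0))) (var 1), retCfg (var 0) (node leaf (var 1))),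
   (retCfg (node (num 2) (node (node (var 0) (var 1)) (var 2))) (var 3),
    retCfg (var 2) (node (var 0) (var 3))),
   (retCfg (node (num 3) (node (var 0) (var 1))) (var 2), evalCfg (var 0) (var 1) (var 2)),
   (retCfg (node (num 4) (node (var 0) (var 1))) leaf, retCfg (var 1) leaf),
   (retCfg (node (num 4) (node (var 0) (var 1))) (node leaf (var 2)), retCfg (var 1) (var 2)),
   (retCfg (node (num 4) (node (var 0) (var 1))) (node (node leaf (var 2)) (var 3)),
    evalCfg (var 0) (node (num 4) (node (var 0) (var 1))) (var 3))]

theorem rules_clash : ∀ r ∈ rules, ∀ r' ∈ rules, r = r' ∨ clash r.1 r'.1 = true := by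
  have h : ∀ i j : Fin rules.length, i = j ∨ clash (rules.get i).1 (rules.get j).1 = true := by
    decide
  intro r hr r' hr'
  obtain ⟨i, rfl⟩ := List.mem_iff_get.1 hr
  obtain ⟨j, rfl⟩ := List.mem_iff_get.1 hr'
  exact (h i j).imp (congrArg rules.get) id

theorem rules_vars : ∀ r ∈ rules, ∀ i ∈ r.2.vars, i ∈ r.1.vars := by
  decide

end BPat

namespace BTree

open BPat (rules)

/-- One rewriting step, at the root of a tree. -/
def Step (t t' : BTree) : Prop :=
  ∃ r ∈ rules, ∃ σ, t = r.1.subst σ ∧ t' = r.2.subst σ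

theorem Step.unique {t t₁ t₂ : BTree} (h₁ : Step t t₁) (h₂ : Step t t₂) : t₁ = t₂ := by
  obtain ⟨r, hr, σ, rfl, rfl⟩ := h₁
  obtain ⟨r', hr', τ, e, rfl⟩ := h₂
  rcases BPat.rules_clash r hr r' hr' with rfl | h
  · rw [BPat.subst_eq_iff] at e ⊢
    exact fun i hi => e i (BPat.rules_vars r hr i hi)
  · exact absurd e (BPat.subst_ne_of_clash h σ τ)

theorem exists_finset_of_reaches {t t' : BTree} (h : Relation.ReflTransGen Step t t')
    (ht' : ∀ s, ¬ Step t' s) :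
    ∃ S : Finset BTree, t ∈ S ∧ (∀ s ∈ S, s = t' ∨ ∃ s', Step s s') ∧
      ∀ s ∈ S, ∀ s', Step s s' → s' ∈ S := by
  classical
  induction h using Relation.ReflTransGen.head_induction_on with
  | refl => exact ⟨{t'}, by simp, by simp, by simp [ht']⟩
  | @head a b hab _ ih =>
    obtain ⟨S, hb, hS, hS'⟩ := ih
    refine ⟨insert a S, by simp, ?_, ?_⟩
    · simp only [Finset.mem_insert, forall_eq_or_imp]
      exact ⟨.inr ⟨b, hab⟩, hS⟩
    · simp only [Finset.mem_insert, forall_eq_or_imp]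
      exact ⟨fun s hs => .inr (hs.unique hab ▸ hb), fun s hs u h => .inr (hS' s hs u h)⟩

/-- The unary numeral `n`. -/
def num : ℕ → BTree
  | 0 => leaf
  | n + 1 => node leaf (num n)

/-- The tree coding a list of natural numbers. -/
def list : List ℕ → BTree
  | [] => leaf
  | n :: v => node (num n) (list v)

/-- The tree coding a program. -/
def code : Turing.ToPartrec.Code → BTree
  | .zero' => node (num 0) leaf
  | .succ => node (num 1) leaf
  | .tail => node (num 2) leaf
  | .cons f fs => node (num 3) (node (code f) (code fs))
  | .comp f g => node (num 4) (node (code f) (code g))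
  | .case f g => node (num 5) (node (code f) (code g))
  | .fix f => node (num 6) (code f)

/-- The configuration about to evaluate the code `c` on `v`, with continuation `k`. -/
def evalCfg (c k v : BTree) : BTree := node leaf (node c (node k v))

/-- The configuration returning the value `v` to the continuation `k`. -/
def retCfg (k v : BTree) : BTree := node (node leaf leaf) (node k v)

theorem step_rule (i : Fin 18) (σ : Fin 5 → BTree) :
    Step ((rules.get i).1.subst σ) ((rules.get i).2.subst σ) :=
  ⟨_, List.get_mem rules i, σ, rfl, rfl⟩

open Turing.ToPartrec in
theorem reaches_of_mem_eval (c : Code) (v v' : List ℕ) (h : v' ∈ c.eval v) (k : BTree) :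
    Relation.ReflTransGen Step (evalCfg (code c) k (list v)) (retCfg k (list v')) := by
  induction c generalizing v v' k with
  | zero' =>
    obtain rfl : v' = 0 :: v := by simpa using h
    exact .single (step_rule 0 ![k, list v, leaf, leaf, leaf])
  | succ =>
    obtain rfl : v' = [v.headI.succ] := by simpa using h
    cases v with
    | nil => exact .single (step_rule 1 ![k, leaf, leaf, leaf, leaf])
    | cons n v => exact .single (step_rule 2 ![k, num n, list v, leaf, leaf])
  | tail =>
    obtain rfl : v' = v.tail := by simpa using h
    cases v with
    | nil => exact .single (step_rule 3 ![k, leaf, leaf, leaf, leaf])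
    | cons n v => exact .single (step_rule 4 ![k, num n, list v, leaf, leaf])
  | cons f fs hf hfs =>
    obtain ⟨v₁, h₁, v₂, h₂, rfl⟩ : ∃ v₁ ∈ f.eval v, ∃ v₂ ∈ fs.eval v, v₁.headI :: v₂ = v' := by
      simpa [eq_comm] using h
    refine .head (step_rule 5 ![code f, code fs, k, list v, leaf]) ?_
    refine (hf v v₁ h₁ _).trans ?_
    refine .head (step_rule 11 ![code fs, list v, k, list v₁, leaf]) ?_
    refine (hfs v v₂ h₂ _).trans ?_
    cases v₁ with
    | nil => exact .single (step_rule 12 ![k, list v₂, leaf, leaf, leaf])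
    | cons n v₁ => exact .single (step_rule 13 ![num n, list v₁, k, list v₂, leaf])
  | comp f g hf hg =>
    obtain ⟨v₁, h₁, h₂⟩ : ∃ v₁ ∈ g.eval v, v' ∈ f.eval v₁ := by
      rw [Code.comp_eval] at h
      exact Part.mem_bind_iff.1 h
    refine .head (step_rule 6 ![code f, code g, k, list v, leaf]) ?_
    refine (hg v v₁ h₁ _).trans ?_
    exact .head (step_rule 14 ![code f, k, list v₁, leaf, leaf]) (hf v₁ v' h₂ _)
  | case f g hf hg =>
    rw [Code.case_eval] at h
    rcases v with _ | ⟨_ | n, v⟩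
    · exact .head (step_rule 7 ![code f, code g, k, leaf, leaf]) (hf [] v' h _)
    · exact .head (step_rule 8 ![code f, code g, k, list v, leaf]) (hf v v' h _)
    · exact .head (step_rule 9 ![code f, code g, k, num n, list v]) (hg (n :: v) v' h _)
  | fix f hf =>
    rw [Code.fix_eval] at h
    refine .head (step_rule 10 ![code f, k, list v, leaf, leaf]) ?_
    refine PFun.fixInduction' h (fun v h => ?_) fun v v₂ _ h ih => ?_
    · obtain ⟨v₁, h₁, h₂⟩ := (Part.mem_map_iff _).1 h
      refine (hf v v₁ h₁ _).trans ?_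
      rcases v₁ with _ | ⟨_ | n, v₁⟩
      · obtain rfl : [] = v' := by simpa using h₂
        exact .single (step_rule 15 ![code f, k, leaf, leaf, leaf])
      · obtain rfl : v₁ = v' := by simpa using h₂
        exact .single (step_rule 16 ![code f, k, list v₁, leaf, leaf])
      · simp at h₂
    · obtain ⟨v₁, h₁, h₂⟩ := (Part.mem_map_iff _).1 h
      refine (hf v v₁ h₁ _).trans ?_
      rcases v₁ with _ | ⟨_ | n, v₁⟩
      · simp at h₂
      · simp at h₂
      · obtain rfl : v₁ = v₂ := by simpa using h₂
        exact .head (step_rule 17 ![code f, k, num n, list v₁, leaf]) ih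

theorem not_step_retCfg_leaf (v s : BTree) : ¬ Step (retCfg leaf v) s := by
  rintro ⟨r, hr, σ, h, -⟩
  have : ∀ r ∈ rules, BPat.clash (BPat.retCfg .leaf (.var 0)) r.1 = true := by decide
  exact BPat.subst_ne_of_clash (this r hr) (fun _ => v) σ h

end BTree

/-- There is a program for which the inputs with output `0` and those with output `1` are
computably inseparable. -/
theorem exists_code_inseparable : ∃ c : Turing.ToPartrec.Code, ∀ h : ℕ → Bool, Computable h →
    ∃ n, [bif h n then 0 else 1] ∈ c.eval [n] := by
  have hU : Partrec fun n : ℕ => (Denumerable.ofNat Nat.Partrec.Code n).eval n :=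
    Nat.Partrec.Code.eval_part.comp (Computable.ofNat _) Computable.id
  obtain ⟨c, hc⟩ := Turing.ToPartrec.Code.exists_code (Nat.Partrec'.part_iff₁.2 hU)
  refine ⟨c, fun h hh => ?_⟩
  have hg : Computable fun n => bif h n then 0 else 1 :=
    Computable.cond hh (Computable.const 0) (Computable.const 1)
  obtain ⟨e, he⟩ := Nat.Partrec.Code.exists_code.1 (Partrec.nat_iff.1 hg)
  refine ⟨Encodable.encode e, ?_⟩
  have := hc ⟨[Encodable.encode e], rfl⟩
  change c.eval [Encodable.encode e] = _ at this
  rw [this]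
  change _ ∈ pure <$> (Denumerable.ofNat Nat.Partrec.Code (Encodable.encode e)).eval _
  rw [Denumerable.ofNat_encode, he]
  exact Part.mem_map _ (Part.mem_some _)

/-! ### Interpreting trees in ordered sets -/

namespace BPat

/-- A tree as a pattern without variables. -/
def ofTree : BTree → BPat
  | .leaf => leaf
  | .node a b => node (ofTree a) (ofTree b)

@[simp]
theorem subst_ofTree (t : BTree) (σ : Fin 5 → BTree) : (ofTree t).subst σ = t := by
  induction t with
  | leaf => rfl
  | node a b ha hb => simp [ofTree, subst, ha, hb]

/-- The pattern of the initial configurations of a program, with the input as variable. -/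
def init (c : Turing.ToPartrec.Code) : BPat :=
  evalCfg (ofTree (BTree.code c)) leaf (node (var 0) leaf)

/-- The configuration that has halted with output `1`. -/
def haltOne : BPat := retCfg leaf (node (num 1) leaf)

end BPat

section Interpretation

variable {M : Type*} [LE M]

/-- The nodes of the structure coded by the parameters `p`. -/
def IsNode (p : Fin 6 → M) (x : M) : Prop :=
  DoublyPrime x ∧ x ≤ p 1

/-- In the structure coded by the parameters `p`, the node `z` has children `a` and `b`. -/
def HasChildren (p : Fin 6 → M) (z a b : M) : Prop :=
  ∃ e, DoublyPrime e ∧ JoinCovers (p 2) z e ∧ JoinCovers (p 3) e a ∧ JoinCovers (p 4) e b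

/-- In the structure coded by the parameters `p`, the node `z` matches a pattern whose
variables take the values `xs`. -/
def Matches (p : Fin 6 → M) (xs : Fin 5 → M) : BPat → M → Prop
  | .var i, z => z = xs i
  | .leaf, z => z = p 0
  | .node a b, z => ∃ l r, IsNode p l ∧ IsNode p r ∧ HasChildren p z l r ∧
      Matches p xs a l ∧ Matches p xs b r

/-- In the structure coded by the parameters `p`, the node `z` represents a tree. -/
def Represents (p : Fin 6 → M) : BTree → M → Prop
  | .leaf, z => z = p 0
  | .node a b, z => ∃ l r, IsNode p l ∧ IsNode p r ∧ HasChildren p z l r ∧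
      Represents p a l ∧ Represents p b r

/-- In the structure coded by the parameters `p`, the node `z` is a reached configuration. -/
def IsReached (p : Fin 6 → M) (z : M) : Prop :=
  z ≤ p 5 ∧ IsNode p z

/-- A node is determined by its children. -/
def ChildrenDetermine (p : Fin 6 → M) : Prop :=
  ∀ z y a b, IsNode p z → IsNode p y → IsNode p a → IsNode p b →
    HasChildren p z a b → HasChildren p y a b → z = y

/-- The reached configurations are closed under a rewriting rule. -/
def ClosedUnderRule (p : Fin 6 → M) (r : BPat × BPat) : Prop :=
  ∀ z x₀ x₁ x₂ x₃ x₄, IsReached p z → IsNode p x₀ → IsNode p x₁ → IsNode p x₂ → IsNode p x₃ →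
    IsNode p x₄ → Matches p ![x₀, x₁, x₂, x₃, x₄] r.1 z →
    ∃ y, IsReached p y ∧ Matches p ![x₀, x₁, x₂, x₃, x₄] r.2 y

/-- No reached configuration has halted with output `1`. -/
def AvoidsHaltOne (p : Fin 6 → M) : Prop :=
  ∀ z, IsReached p z → ¬ Matches p (fun _ => p 0) .haltOne z

/-- The parameters `p` do not code a set of configurations that avoids the output `1`, is closed
under the rewriting rules, and contains the initial configuration of `c` with the input represented
by the node that one reaches from `z` in `n` successor steps. -/
def NoRunFrom (c : Turing.ToPartrec.Code) (p : Fin 6 → M) : ℕ → M → Prop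
  | 0, z => ChildrenDetermine p → (∀ r ∈ BPat.rules, ClosedUnderRule p r) → AvoidsHaltOne p →
      ∀ y, IsReached p y → ¬ Matches p (fun _ => z) (.init c) y
  | n + 1, z => ∀ z', Matches p (fun _ => z) (.node .leaf (.var 0)) z' → NoRunFrom c p n z'

theorem Represents.unique {p : Fin 6 → M} (hp : ChildrenDetermine p) {t : BTree} {z z' : M}
    (hz : IsNode p z) (hz' : IsNode p z') (h : Represents p t z) (h' : Represents p t z') :
    z = z' := by
  induction t generalizing z z' with
  | leaf => exact Eq.trans h (Eq.symm h')
  | node a b ha hb =>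
    obtain ⟨l, r, hl, hr, hc, h₁, h₂⟩ := h
    obtain ⟨l', r', hl', hr', hc', h₁', h₂'⟩ := h'
    obtain rfl := ha hl hl' h₁ h₁'
    obtain rfl := hb hr hr' h₂ h₂'
    exact hp z z' l r hz hz' hl hr hc hc'

theorem Represents.matches {p : Fin 6 → M} {xs : Fin 5 → M} {σ : Fin 5 → BTree} {q : BPat}
    {z : M} (hxs : ∀ i ∈ q.vars, ∀ y, IsNode p y → Represents p (σ i) y → y = xs i)
    (hz : IsNode p z) (h : Represents p (q.subst σ) z) : Matches p xs q z := by
  induction q generalizing z with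
  | var i => exact hxs i (by simp [BPat.vars]) z hz h
  | leaf => exact h
  | node a b ha hb =>
    obtain ⟨l, r, hl, hr, hc, h₁, h₂⟩ := h
    exact ⟨l, r, hl, hr, hc, ha (fun i hi => hxs i (by simp [BPat.vars, hi])) hl h₁,
      hb (fun i hi => hxs i (by simp [BPat.vars, hi])) hr h₂⟩

theorem Matches.represents {p : Fin 6 → M} {xs : Fin 5 → M} {σ : Fin 5 → BTree} {q : BPat}
    {z : M} (hxs : ∀ i ∈ q.vars, Represents p (σ i) (xs i)) (h : Matches p xs q z) :
    Represents p (q.subst σ) z := by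
  induction q generalizing z with
  | var i => exact Eq.subst (Eq.symm h) (hxs i (by simp [BPat.vars]))
  | leaf => exact h
  | node a b ha hb =>
    obtain ⟨l, r, hl, hr, hc, h₁, h₂⟩ := h
    exact ⟨l, r, hl, hr, hc, ha (fun i hi => hxs i (by simp [BPat.vars, hi])) h₁,
      hb (fun i hi => hxs i (by simp [BPat.vars, hi])) h₂⟩

theorem Represents.exists_var {p : Fin 6 → M} {σ : Fin 5 → BTree} {q : BPat} {z : M}
    (hz : IsNode p z) (h : Represents p (q.subst σ) z) {i : Fin 5} (hi : i ∈ q.vars) :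
    ∃ y, IsNode p y ∧ Represents p (σ i) y := by
  induction q generalizing z with
  | var j =>
    obtain rfl : i = j := by simpa [BPat.vars] using hi
    exact ⟨z, hz, h⟩
  | leaf => simp [BPat.vars] at hi
  | node a b ha hb =>
    obtain ⟨l, r, hl, hr, -, h₁, h₂⟩ := h
    rcases List.mem_append.1 hi with hi | hi
    · exact ha hl h₁ hi
    · exact hb hr h₂ hi

theorem exists_represents_of_step {p : Fin 6 → M} (hp : ChildrenDetermine p)
    (hp' : ∀ r ∈ BPat.rules, ClosedUnderRule p r) {t t' : BTree} (h : BTree.Step t t') {z : M}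
    (hz : IsReached p z) (ht : Represents p t z) : ∃ z', IsReached p z' ∧ Represents p t' z' := by
  classical
  obtain ⟨r, hr, σ, rfl, rfl⟩ := h
  let xs : Fin 5 → M := fun i =>
    if h : ∃ y, IsNode p y ∧ Represents p (σ i) y then h.choose else z
  have hxs : ∀ i, IsNode p (xs i) := by
    intro i
    by_cases h : ∃ y, IsNode p y ∧ Represents p (σ i) y
    · simpa only [xs, dif_pos h] using h.choose_spec.1
    · simpa only [xs, dif_neg h] using hz.2
  have hxs' : ∀ i y, IsNode p y → Represents p (σ i) y → Represents p (σ i) (xs i) := by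
    intro i y hy hy'
    have h : ∃ y, IsNode p y ∧ Represents p (σ i) y := ⟨y, hy, hy'⟩
    simpa only [xs, dif_pos h] using h.choose_spec.2
  have e : ![xs 0, xs 1, xs 2, xs 3, xs 4] = xs := by
    ext i
    fin_cases i <;> rfl
  have := hp' r hr z (xs 0) (xs 1) (xs 2) (xs 3) (xs 4) hz (hxs _) (hxs _) (hxs _) (hxs _) (hxs _)
  rw [e] at this
  obtain ⟨z', hz', h⟩ := this <| Represents.matches
    (fun i _ y hy hy' => Represents.unique hp hy (hxs i) hy' (hxs' i y hy hy')) hz.2 ht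
  refine ⟨z', hz', h.represents fun i hi => ?_⟩
  obtain ⟨y, hy, hy'⟩ := ht.exists_var hz.2 (BPat.rules_vars r hr i hi)
  exact hxs' i y hy hy'

/-- If the program `c` has output `1` on the input `n`, then no parameters code a run of `c` that
avoids the output `1`. -/
theorem noRunFrom_of_mem_eval {c : Turing.ToPartrec.Code} {p : Fin 6 → M} {m n : ℕ}
    (h : [1] ∈ c.eval [m + n]) {z : M} (hz : Represents p (BTree.num m) z) :
    NoRunFrom c p n z := by
  induction n generalizing m z with
  | zero =>
    intro hp hp' hp'' y hy hm
    have hy' : Represents p (BTree.evalCfg (BTree.code c) .leaf (BTree.list [m])) y := by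
      have := Matches.represents (σ := fun _ => BTree.num m) (fun i _ => hz) hm
      simpa [BPat.init, BPat.evalCfg, BPat.subst, BTree.evalCfg, BTree.list] using this
    have key := BTree.reaches_of_mem_eval c _ _ h .leaf
    rw [Nat.add_zero] at key
    clear hm
    generalize BTree.evalCfg (BTree.code c) .leaf (BTree.list [m]) = t at key hy'
    induction key using Relation.ReflTransGen.head_induction_on generalizing y with
    | refl =>
      refine hp'' y hy (Represents.matches (σ := fun _ => .leaf) ?_ hy.2 hy')
      intro i hi
      simp [BPat.haltOne, BPat.retCfg, BPat.num, BPat.vars] at hi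
    | head hs _ ih =>
      obtain ⟨y', h₁, h₂⟩ := exists_represents_of_step hp hp' hs hy hy'
      exact ih y' h₁ h₂
  | succ n ih =>
    intro z' hz'
    refine ih (m := m + 1) (by rwa [Nat.add_right_comm] ) ?_
    have := Matches.represents (σ := fun _ => BTree.num m) (fun i _ => hz) hz'
    exact this

end Interpretation

namespace BTree

/-- The subtrees of a tree. -/
def subtrees : BTree → Set BTree
  | leaf => {leaf}
  | node a b => insert (node a b) (subtrees a ∪ subtrees b)

theorem self_mem_subtrees (t : BTree) : t ∈ t.subtrees := by
  cases t <;> simp [subtrees]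

theorem finite_subtrees (t : BTree) : t.subtrees.Finite := by
  induction t with
  | leaf => simp [subtrees]
  | node a b ha hb => exact (ha.union hb).insert _

theorem mem_subtrees_of_node_mem {a b t : BTree} (h : node a b ∈ t.subtrees) :
    a ∈ t.subtrees ∧ b ∈ t.subtrees := by
  induction t with
  | leaf => simp [subtrees] at h
  | node a' b' ha hb =>
    simp only [subtrees, Set.mem_insert_iff, Set.mem_union, node.injEq] at h ⊢
    rcases h with ⟨rfl, rfl⟩ | h | h
    · simp [self_mem_subtrees]
    · simp [ha h]
    · simp [hb h]

theorem exists_finset_subtree_closed (S : Finset BTree) : ∃ T : Finset BTree, S ⊆ T ∧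
    ∀ a b, node a b ∈ T → a ∈ T ∧ b ∈ T := by
  have hf : (⋃ t ∈ S, t.subtrees).Finite := S.finite_toSet.biUnion fun t _ => finite_subtrees t
  refine ⟨hf.toFinset, fun t ht => ?_, fun a b h => ?_⟩
  · simpa using ⟨t, ht, self_mem_subtrees t⟩
  · simp only [Set.Finite.mem_toFinset, Set.mem_iUnion, exists_prop] at h ⊢
    obtain ⟨t, ht, h⟩ := h
    exact ⟨⟨t, ht, (mem_subtrees_of_node_mem h).1⟩, ⟨t, ht, (mem_subtrees_of_node_mem h).2⟩⟩

end BTree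

namespace FreeLat

/-- The generator representing a tree. -/
def tree (t : BTree) : FreeLat.{v} (BTree × Fin 3) := of (t, 0)

theorem tree_injective : Function.Injective tree.{v} := fun _ _ h =>
  congrArg Prod.fst (of_injective h)

/-- Every finite set of trees with a finite subset of reached configurations is coded by some
parameters in the free lattice. -/
theorem exists_parameters (T R : Finset BTree) (hT : T.Nonempty) (hR : R.Nonempty) :
    ∃ p : Fin 6 → FreeLat.{v} (BTree × Fin 3), p 0 = tree .leaf ∧
      (∀ x, IsNode p x ↔ ∃ t ∈ T, x = tree t) ∧
      (∀ t ∈ T, ∀ a b, HasChildren p (tree t) (tree a) (tree b) ↔ t = .node a b) ∧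
      ∀ t, tree t ≤ p 5 ↔ t ∈ R := by
  obtain ⟨d, hd⟩ := exists_code_set T hT fun t => (t, (0 : Fin 3))
  obtain ⟨r, hr⟩ := exists_code_set R hR fun t => (t, (0 : Fin 3))
  obtain ⟨w, hw⟩ := exists_code_edges T hT (fun t => (t, (0 : Fin 3))) fun t => (t, (1 : Fin 3))
  obtain ⟨w₁, hw₁⟩ := exists_code_edges T hT (fun t => (t, (1 : Fin 3))) fun t =>
    match t with
    | .leaf => (t, (2 : Fin 3))
    | .node a _ => (a, 0)
  obtain ⟨w₂, hw₂⟩ := exists_code_edges T hT (fun t => (t, (1 : Fin 3))) fun t =>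
    match t with
    | .leaf => (t, (2 : Fin 3))
    | .node _ b => (b, 0)
  refine ⟨![tree .leaf, d, w, w₁, w₂, r], rfl, fun x => ?_, fun t ht a b => ?_, fun t => ?_⟩
  · change _ ∧ x ≤ d ↔ _
    rw [doublyPrime_iff]
    constructor
    · rintro ⟨⟨g, rfl⟩, h⟩
      obtain ⟨t, ht, rfl⟩ := (hd g).1 h
      exact ⟨t, ht, rfl⟩
    · rintro ⟨t, ht, rfl⟩
      exact ⟨⟨_, rfl⟩, (hd _).2 ⟨t, ht, rfl⟩⟩
  · change (∃ e, _ ∧ JoinCovers w _ e ∧ JoinCovers w₁ e _ ∧ JoinCovers w₂ e _) ↔ _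
    constructor
    · rintro ⟨e, he, h, h₁, h₂⟩
      obtain ⟨g, rfl⟩ := doublyPrime_iff.1 he
      obtain ⟨s, -, hs, hs'⟩ := (hw _ _).1 h
      obtain rfl : g = (t, 1) := by grind
      obtain ⟨s₁, -, hs₁, hs₁'⟩ := (hw₁ _ _).1 h₁
      obtain ⟨s₂, -, hs₂, hs₂'⟩ := (hw₂ _ _).1 h₂
      grind
    · rintro rfl
      exact ⟨of (.node a b, 1), doublyPrime_iff.2 ⟨_, rfl⟩, (hw _ _).2 ⟨_, ht, by simp⟩,
        (hw₁ _ _).2 ⟨_, ht, by simp⟩, (hw₂ _ _).2 ⟨_, ht, by simp⟩⟩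
  · refine (hr _).trans ⟨?_, fun h => ⟨t, h, rfl⟩⟩
    rintro ⟨s, hs, h⟩
    obtain rfl : s = t := congrArg Prod.fst h
    exact hs

/-- If the program `c` has output `0` on the input `n`, then some parameters in the free lattice
code a run of `c` that avoids the output `1`. -/
theorem exists_not_noRunFrom {c : Turing.ToPartrec.Code} {n : ℕ} (h : [0] ∈ c.eval [n]) :
    ∃ p : Fin 6 → FreeLat.{v} (BTree × Fin 3), ¬ NoRunFrom c p n (p 0) := by
  classical
  obtain ⟨R, hR, hR', hR''⟩ := BTree.exists_finset_of_reaches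
    (BTree.reaches_of_mem_eval c _ _ h .leaf) (BTree.not_step_retCfg_leaf _)
  obtain ⟨T, hT, hT'⟩ := BTree.exists_finset_subtree_closed
    (R ∪ (Finset.range (n + 1)).image BTree.num)
  have hRT : ∀ t ∈ R, t ∈ T := fun t ht => hT (Finset.mem_union_left _ ht)
  have hnum : ∀ i ≤ n, BTree.num i ∈ T := fun i hi => hT (Finset.mem_union_right _
    (Finset.mem_image_of_mem _ (Finset.mem_range.2 (by omega))))
  obtain ⟨p, hp, hnode, hch, hre⟩ := exists_parameters.{v} T R ⟨_, hRT _ hR⟩ ⟨_, hR⟩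
  have hreach : ∀ z, IsReached p z ↔ ∃ t ∈ R, z = tree t := by
    intro z
    rw [IsReached, hnode]
    constructor
    · rintro ⟨h, t, -, rfl⟩
      exact ⟨t, (hre t).1 h, rfl⟩
    · rintro ⟨t, ht, rfl⟩
      exact ⟨(hre t).2 ht, t, hRT t ht, rfl⟩
  have hmatch : ∀ (σ : Fin 5 → BTree) (q : BPat), ∀ t ∈ T,
      (Matches p (fun i => tree (σ i)) q (tree t) ↔ t = q.subst σ) := by
    intro σ q
    induction q with
    | var i => exact fun t _ => tree_injective.eq_iff
    | leaf =>
      intro t _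
      rw [Matches, hp]
      exact tree_injective.eq_iff
    | node a b ha hb =>
      intro t ht
      rw [Matches]
      constructor
      · rintro ⟨l, r, hl, hr, hc, h₁, h₂⟩
        obtain ⟨l, hlT, rfl⟩ := (hnode l).1 hl
        obtain ⟨r, hrT, rfl⟩ := (hnode r).1 hr
        rw [(hch t ht l r).1 hc, (ha l hlT).1 h₁, (hb r hrT).1 h₂]
        rfl
      · rintro rfl
        have := hT' _ _ ht
        exact ⟨_, _, (hnode _).2 ⟨_, this.1, rfl⟩, (hnode _).2 ⟨_, this.2, rfl⟩,
          (hch _ ht _ _).2 rfl, (ha _ this.1).2 rfl, (hb _ this.2).2 rfl⟩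
  refine ⟨p, ?_⟩
  have key : ∀ i m, i + m = n → ¬ NoRunFrom c p m (tree (.num i)) := by
    intro i m
    induction m generalizing i with
    | zero =>
      rintro rfl h
      refine h ?_ ?_ ?_ (tree _) ((hreach _).2 ⟨_, hR, rfl⟩)
        ((hmatch (fun _ => .num i) _ _ (hRT _ hR)).2 ?_)
      · intro z z' a b hz hz' ha hb h h'
        obtain ⟨z, hzT, rfl⟩ := (hnode z).1 hz
        obtain ⟨z', hzT', rfl⟩ := (hnode z').1 hz'
        obtain ⟨a, ha, rfl⟩ := (hnode a).1 ha
        obtain ⟨b, hb, rfl⟩ := (hnode b).1 hb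
        rw [(hch _ hzT _ _).1 h, (hch _ hzT' _ _).1 h']
      · intro r hr z x₀ x₁ x₂ x₃ x₄ hz h₀ h₁ h₂ h₃ h₄ hm
        obtain ⟨t, ht, rfl⟩ := (hreach z).1 hz
        obtain ⟨x₀, -, rfl⟩ := (hnode x₀).1 h₀
        obtain ⟨x₁, -, rfl⟩ := (hnode x₁).1 h₁
        obtain ⟨x₂, -, rfl⟩ := (hnode x₂).1 h₂
        obtain ⟨x₃, -, rfl⟩ := (hnode x₃).1 h₃
        obtain ⟨x₄, -, rfl⟩ := (hnode x₄).1 h₄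
        have e : ![tree x₀, tree x₁, tree x₂, tree x₃, tree x₄] =
            fun i => tree.{v} (![x₀, x₁, x₂, x₃, x₄] i) := by
          ext i
          fin_cases i <;> rfl
        rw [e] at hm ⊢
        have ht' := (hmatch _ _ t (hRT t ht)).1 hm
        have hs := hR'' t ht _ ⟨r, hr, _, ht', rfl⟩
        exact ⟨tree _, (hreach _).2 ⟨_, hs, rfl⟩, (hmatch _ _ _ (hRT _ hs)).2 rfl⟩
      · intro z hz hm
        obtain ⟨t, ht, rfl⟩ := (hreach z).1 hz
        rw [hp] at hm
        obtain rfl := (hmatch (fun _ => .leaf) _ t (hRT t ht)).1 hm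
        rcases hR' _ ht with h | ⟨s, h⟩
        · simp [BPat.haltOne, BPat.retCfg, BTree.retCfg, BPat.subst, BPat.num, BTree.list,
            BTree.num] at h
        · exact BTree.not_step_retCfg_leaf _ _ h
      · simp [BPat.init, BPat.evalCfg, BPat.subst, BTree.evalCfg, BTree.list]
    | succ m ih =>
      intro hi h
      refine ih (i + 1) (by omega) (h _ ?_)
      exact (hmatch (fun _ => .num i) (.node .leaf (.var 0)) _ (hnum (i + 1) (by omega))).2 rfl
  rw [hp]
  exact key 0 n (by omega)

end FreeLat

/-! ### Formulas in the language of ordered sets -/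

/-- Formulas in the language of ordered sets with `n` variables. -/
abbrev OrderFormula (n : ℕ) := Language.order.BoundedFormula Empty n

namespace OrderFormula

variable {n : ℕ}

/-- The formula `x ≤ y`. -/
def le (x y : Fin n) : OrderFormula n :=
  Term.le (Language.var (Sum.inr x)) (Language.var (Sum.inr y))

/-- The formula `x = y`. -/
def eq (x y : Fin n) : OrderFormula n := le x y ⊓ le y x

/-- The formula `JoinCovers w x y`. -/
def joinCovers (w x y : Fin n) : OrderFormula n :=
  (le x.castSucc (Fin.last n) ⟹ (le y.castSucc (Fin.last n) ⟹ le w.castSucc (Fin.last n))).all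

/-- The dual of the formula `JoinCovers w x y`. -/
def meetCovers (w x y : Fin n) : OrderFormula n :=
  (le (Fin.last n) x.castSucc ⟹ (le (Fin.last n) y.castSucc ⟹ le (Fin.last n) w.castSucc)).all

/-- The formula `DoublyPrime x`. -/
def doublyPrime (x : Fin n) : OrderFormula n :=
  (joinCovers x.castSucc.castSucc (Fin.last n).castSucc (Fin.last (n + 1)) ⟹
    (le x.castSucc.castSucc (Fin.last n).castSucc ⊔
      le x.castSucc.castSucc (Fin.last (n + 1)))).all.all ⊓
  (meetCovers x.castSucc.castSucc (Fin.last n).castSucc (Fin.last (n + 1)) ⟹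
    (le (Fin.last n).castSucc x.castSucc.castSucc ⊔
      le (Fin.last (n + 1)) x.castSucc.castSucc)).all.all

/-- The formula `IsNode p x`. -/
def isNode (p : Fin 6 → Fin n) (x : Fin n) : OrderFormula n :=
  doublyPrime x ⊓ le x (p 1)

/-- The formula `HasChildren p z a b`. -/
def hasChildren (p : Fin 6 → Fin n) (z a b : Fin n) : OrderFormula n :=
  (doublyPrime (Fin.last n) ⊓ (joinCovers (p 2).castSucc z.castSucc (Fin.last n) ⊓
    (joinCovers (p 3).castSucc (Fin.last n) a.castSucc ⊓
      joinCovers (p 4).castSucc (Fin.last n) b.castSucc))).ex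

/-- The formula `Matches p x q z`. -/
def matching {n : ℕ} (p : Fin 6 → Fin n) (x : Fin 5 → Fin n) : BPat → Fin n → OrderFormula n
  | .var i, z => eq z (x i)
  | .leaf, z => eq z (p 0)
  | .node a b, z =>
    (isNode (fun i => (p i).castSucc.castSucc) (Fin.last n).castSucc ⊓
      (isNode (fun i => (p i).castSucc.castSucc) (Fin.last (n + 1)) ⊓
        (hasChildren (fun i => (p i).castSucc.castSucc) z.castSucc.castSucc (Fin.last n).castSucc
            (Fin.last (n + 1)) ⊓
          (matching (fun i => (p i).castSucc.castSucc) (fun i => (x i).castSucc.castSucc) a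
              (Fin.last n).castSucc ⊓
            matching (fun i => (p i).castSucc.castSucc) (fun i => (x i).castSucc.castSucc) b
              (Fin.last (n + 1)))))).ex.ex

/-- The formula `IsReached p z`. -/
def isReached (p : Fin 6 → Fin n) (z : Fin n) : OrderFormula n :=
  le z (p 5) ⊓ isNode p z

/-- The formula `ChildrenDetermine p`. -/
def childrenDetermine (p : Fin 6 → Fin n) : OrderFormula n :=
  let p' : Fin 6 → Fin (n + 4) := fun i => (p i).castSucc.castSucc.castSucc.castSucc
  let z : Fin (n + 4) := (Fin.last n).castSucc.castSucc.castSucc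
  let z' : Fin (n + 4) := (Fin.last (n + 1)).castSucc.castSucc
  let a : Fin (n + 4) := (Fin.last (n + 2)).castSucc
  let b : Fin (n + 4) := Fin.last (n + 3)
  (isNode p' z ⟹ (isNode p' z' ⟹ (isNode p' a ⟹ (isNode p' b ⟹
    (hasChildren p' z a b ⟹ (hasChildren p' z' a b ⟹ eq z z')))))).all.all.all.all

/-- The formula `ClosedUnderRule p r`. -/
def closedUnder (p : Fin 6 → Fin n) (r : BPat × BPat) : OrderFormula n :=
  let p' : Fin 6 → Fin (n + 6) :=
    fun i => (p i).castSucc.castSucc.castSucc.castSucc.castSucc.castSucc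
  let z : Fin (n + 6) := (Fin.last n).castSucc.castSucc.castSucc.castSucc.castSucc
  let x₀ : Fin (n + 6) := (Fin.last (n + 1)).castSucc.castSucc.castSucc.castSucc
  let x₁ : Fin (n + 6) := (Fin.last (n + 2)).castSucc.castSucc.castSucc
  let x₂ : Fin (n + 6) := (Fin.last (n + 3)).castSucc.castSucc
  let x₃ : Fin (n + 6) := (Fin.last (n + 4)).castSucc
  let x₄ : Fin (n + 6) := Fin.last (n + 5)
  (isReached p' z ⟹ (isNode p' x₀ ⟹ (isNode p' x₁ ⟹ (isNode p' x₂ ⟹ (isNode p' x₃ ⟹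
    (isNode p' x₄ ⟹ (matching p' ![x₀, x₁, x₂, x₃, x₄] r.1 z ⟹
      (isReached (fun i => (p' i).castSucc) (Fin.last (n + 6)) ⊓
        matching (fun i => (p' i).castSucc)
          ![x₀.castSucc, x₁.castSucc, x₂.castSucc, x₃.castSucc, x₄.castSucc] r.2
          (Fin.last (n + 6))).ex))))))).all.all.all.all.all.all

/-- The formula stating `ClosedUnderRule p r` for all members `r` of a list. -/
def closedUnderAll (p : Fin 6 → Fin n) : List (BPat × BPat) → OrderFormula n
  | [] => ∼⊥
  | r :: rs => closedUnder p r ⊓ closedUnderAll p rs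

/-- The formula `AvoidsHaltOne p`. -/
def avoidsHaltOne (p : Fin 6 → Fin n) : OrderFormula n :=
  (isReached (fun i => (p i).castSucc) (Fin.last n) ⟹
    ∼(matching (fun i => (p i).castSucc) (fun _ => (p 0).castSucc) .haltOne (Fin.last n))).all

/-- The formula `NoRunFrom c p 0 z`. -/
def noRunFromZero (c : Turing.ToPartrec.Code) (p : Fin 6 → Fin n) (z : Fin n) : OrderFormula n :=
  childrenDetermine p ⟹ (closedUnderAll p BPat.rules ⟹ (avoidsHaltOne p ⟹
    (isReached (fun i => (p i).castSucc) (Fin.last n) ⟹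
      ∼(matching (fun i => (p i).castSucc) (fun _ => z.castSucc) (.init c) (Fin.last n))).all))

/-- The formula expressing that the node `z'` is the successor of the node `z`. -/
def isSucc (p : Fin 6 → Fin n) (z y : Fin n) : OrderFormula n :=
  matching p (fun _ => z) (.node .leaf (.var 0)) y

/-- The formula `NoRunFrom c p k z`. -/
def noRunFrom (c : Turing.ToPartrec.Code) :
    (k : ℕ) → {n : ℕ} → (p : Fin 6 → Fin n) → (z : Fin n) → OrderFormula n
  | 0, _, p, z => noRunFromZero c p z
  | k + 1, n, p, z =>
    (isSucc (fun i => (p i).castSucc) z.castSucc (Fin.last n) ⟹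
      noRunFrom c k (fun i => (p i).castSucc) (Fin.last n)).all

/-- The sentence expressing that no parameters code a run of `c` on the input `k` that avoids the
output `1`. -/
def noRun (c : Turing.ToPartrec.Code) (k : ℕ) : Language.order.Sentence :=
  (eq (6 : Fin 7) 0 ⟹ noRunFrom c k (Fin.castSucc : Fin 6 → Fin 7) 6).alls

section Realize

variable {M : Type*} [PartialOrder M] {e : Empty → M} {v : Fin n → M}

@[simp]
theorem realize_le {x y : Fin n} : (le x y).Realize e v ↔ v x ≤ v y := by
  rfl

@[simp]
theorem realize_eq {x y : Fin n} : (eq x y).Realize e v ↔ v x = v y := by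
  simp [eq, le_antisymm_iff]

@[simp]
theorem realize_joinCovers {w x y : Fin n} :
    (joinCovers w x y).Realize e v ↔ JoinCovers (v w) (v x) (v y) := by
  simp [joinCovers, JoinCovers]

@[simp]
theorem realize_doublyPrime {x : Fin n} :
    (doublyPrime x).Realize e v ↔ DoublyPrime (v x) := by
  simp [doublyPrime, meetCovers, DoublyPrime]

@[simp]
theorem realize_isNode {p : Fin 6 → Fin n} {x : Fin n} :
    (isNode p x).Realize e v ↔ IsNode (fun i => v (p i)) (v x) := by
  simp [isNode, IsNode]

@[simp]
theorem realize_hasChildren {p : Fin 6 → Fin n} {z a b : Fin n} :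
    (hasChildren p z a b).Realize e v ↔ HasChildren (fun i => v (p i)) (v z) (v a) (v b) := by
  simp [hasChildren, HasChildren]

@[simp]
theorem realize_matching {p : Fin 6 → Fin n} {x : Fin 5 → Fin n} {q : BPat} {z : Fin n} :
    (matching p x q z).Realize e v ↔ Matches (fun i => v (p i)) (fun i => v (x i)) q (v z) := by
  induction q generalizing n with
  | var i => simp [matching, Matches]
  | leaf => simp [matching, Matches]
  | node a b ha hb => simp [matching, Matches, ha, hb]

@[simp]
theorem realize_isReached {p : Fin 6 → Fin n} {z : Fin n} :
    (isReached p z).Realize e v ↔ IsReached (fun i => v (p i)) (v z) := by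
  simp [isReached, IsReached]

@[simp]
theorem realize_childrenDetermine {p : Fin 6 → Fin n} :
    (childrenDetermine p).Realize e v ↔ ChildrenDetermine fun i => v (p i) := by
  simp [childrenDetermine, ChildrenDetermine]

@[simp]
theorem realize_closedUnder {p : Fin 6 → Fin n} {r : BPat × BPat} :
    (closedUnder p r).Realize e v ↔ ClosedUnderRule (fun i => v (p i)) r := by
  have h {N : ℕ} (v : Fin N → M) (x₀ x₁ x₂ x₃ x₄ : Fin N) :
      (fun i => v (![x₀, x₁, x₂, x₃, x₄] i)) = ![v x₀, v x₁, v x₂, v x₃, v x₄] := by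
    ext i
    fin_cases i <;> rfl
  simp only [closedUnder, BoundedFormula.realize_all, BoundedFormula.realize_imp,
    BoundedFormula.realize_ex, BoundedFormula.realize_inf, realize_isReached, realize_isNode,
    realize_matching, h, Fin.snoc_castSucc, Fin.snoc_last, ClosedUnderRule]

@[simp]
theorem realize_closedUnderAll {p : Fin 6 → Fin n} {rs : List (BPat × BPat)} :
    (closedUnderAll p rs).Realize e v ↔ ∀ r ∈ rs, ClosedUnderRule (fun i => v (p i)) r := by
  induction rs with
  | nil => simp [closedUnderAll]
  | cons r rs ih => simp [closedUnderAll, ih]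

@[simp]
theorem realize_avoidsHaltOne {p : Fin 6 → Fin n} :
    (avoidsHaltOne p).Realize e v ↔ AvoidsHaltOne fun i => v (p i) := by
  simp [avoidsHaltOne, AvoidsHaltOne]

@[simp]
theorem realize_noRunFrom {c : Turing.ToPartrec.Code} {k : ℕ} {p : Fin 6 → Fin n} {z : Fin n} :
    (noRunFrom c k p z).Realize e v ↔ NoRunFrom c (fun i => v (p i)) k (v z) := by
  induction k generalizing n with
  | zero => simp [noRunFrom, noRunFromZero, NoRunFrom]
  | succ k ih => simp [noRunFrom, isSucc, NoRunFrom, ih]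

theorem realize_noRun {c : Turing.ToPartrec.Code} {k : ℕ} :
    M ⊨ noRun c k ↔ ∀ p : Fin 6 → M, NoRunFrom c p k (p 0) := by
  refine BoundedFormula.realize_alls.trans ?_
  simp only [BoundedFormula.realize_imp, realize_eq, realize_noRunFrom]
  constructor
  · intro h p
    have := h (Fin.snoc p (p 0))
    simp only [Fin.snoc_castSucc] at this
    exact this rfl
  · intro h v hv
    rw [hv]
    exact h _

end Realize

end OrderFormula

/-! ### Computability of the encoding of formulas -/

namespace OrderFormula

/-- The list of codes of the symbols of a formula. -/
def codes {n : ℕ} (φ : OrderFormula n) : List ℕ := φ.listEncode.map Encodable.encode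

theorem encode_map_encode {α : Type*} [Encodable α] (l : List α) :
    Encodable.encode (l.map Encodable.encode) = Encodable.encode l := by
  induction l with
  | nil => rfl
  | cons a l ih => simp [ih]

theorem encode_sentence (φ : Language.order.Sentence) :
    Encodable.encode φ = Encodable.encode (codes φ) :=
  (encode_map_encode φ.listEncode).symm

/-- The code of a variable in a formula with `n` variables. -/
def varCode (n i : ℕ) : ℕ := 2 * Nat.pair n (Nat.succ (Nat.pair (2 * (2 * i + 1)) 0))

variable {n : ℕ}

theorem codes_bot : codes (⊥ : OrderFormula n) = [2 * (2 * (n + 2) + 1) + 1] := rfl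

theorem codes_imp (φ ψ : OrderFormula n) : codes (φ ⟹ ψ) = 3 :: (codes φ ++ codes ψ) := by
  simp [codes, BoundedFormula.listEncode]

theorem codes_all (φ : OrderFormula (n + 1)) : codes φ.all = 7 :: codes φ := by
  simp [codes, BoundedFormula.listEncode]

theorem codes_le (x y : Fin n) :
    codes (le x y) = [1, 2 * (2 * n + 1) + 1, varCode n x, varCode n y] := by
  rfl

/-- A family of formulas with primitive recursive codes. -/
def PrimrecFamily {d : ℕ → ℕ} (φ : ∀ k, OrderFormula (d k)) : Prop :=
  Primrec fun k => codes (φ k)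

/-- A family of variables with primitive recursive codes. -/
def PrimrecVar {d : ℕ → ℕ} (x : ∀ k, Fin (d k)) : Prop :=
  Primrec fun k => (x k : ℕ)

section Primrec

variable {d : ℕ → ℕ}

theorem PrimrecVar.castSucc {x : ∀ k, Fin (d k)} (hx : PrimrecVar x) :
    PrimrecVar fun k => (x k).castSucc := hx

theorem primrecVar_last (hd : Primrec d) : PrimrecVar fun k => Fin.last (d k) := hd

theorem primrec_varCode {f g : ℕ → ℕ} (hf : Primrec f) (hg : Primrec g) :
    Primrec fun k => varCode (f k) (g k) := by
  have h (m : ℕ) : Primrec (m * ·) := Primrec.nat_mul.comp (Primrec.const m) Primrec.id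
  exact (h 2).comp (Primrec₂.natPair.comp hf (Primrec.succ.comp (Primrec₂.natPair.comp
    ((h 2).comp (Primrec.succ.comp ((h 2).comp hg))) (Primrec.const 0))))

theorem primrec_symbolCode {f : ℕ → ℕ} (hf : Primrec f) :
    Primrec fun k => 2 * (2 * f k + 1) + 1 := by
  have h : Primrec (2 * ·) := Primrec.nat_mul.comp (Primrec.const 2) Primrec.id
  exact Primrec.succ.comp (h.comp (Primrec.succ.comp (h.comp hf)))

namespace PrimrecFamily

theorem le (hd : Primrec d) {x y : ∀ k, Fin (d k)} (hx : PrimrecVar x) (hy : PrimrecVar y) :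
    PrimrecFamily fun k => le (x k) (y k) :=
  Primrec.list_cons.comp (Primrec.const 1) <| Primrec.list_cons.comp (primrec_symbolCode hd) <|
    Primrec.list_cons.comp (primrec_varCode hd hx) <|
      Primrec.list_cons.comp (primrec_varCode hd hy) (Primrec.const [])

theorem bot (hd : Primrec d) : PrimrecFamily fun k => (⊥ : OrderFormula (d k)) :=
  Primrec.list_cons.comp (primrec_symbolCode (Primrec.succ.comp (Primrec.succ.comp hd)))
    (Primrec.const [])

theorem imp {φ ψ : ∀ k, OrderFormula (d k)} (hφ : PrimrecFamily φ) (hψ : PrimrecFamily ψ) :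
    PrimrecFamily fun k => φ k ⟹ ψ k := by
  simp only [PrimrecFamily, codes_imp]
  exact Primrec.list_cons.comp (Primrec.const 3) (Primrec.list_append.comp hφ hψ)

theorem all {φ : ∀ k, OrderFormula (d k + 1)} (hφ : PrimrecFamily φ) :
    PrimrecFamily fun k => (φ k).all := by
  simp only [PrimrecFamily, codes_all]
  exact Primrec.list_cons.comp (Primrec.const 7) hφ

theorem not (hd : Primrec d) {φ : ∀ k, OrderFormula (d k)} (hφ : PrimrecFamily φ) :
    PrimrecFamily fun k => ∼(φ k) :=
  hφ.imp (bot hd)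

theorem inf (hd : Primrec d) {φ ψ : ∀ k, OrderFormula (d k)} (hφ : PrimrecFamily φ)
    (hψ : PrimrecFamily ψ) : PrimrecFamily fun k => φ k ⊓ ψ k :=
  not hd (hφ.imp (not hd hψ))

theorem sup (hd : Primrec d) {φ ψ : ∀ k, OrderFormula (d k)} (hφ : PrimrecFamily φ)
    (hψ : PrimrecFamily ψ) : PrimrecFamily fun k => φ k ⊔ ψ k :=
  (not hd hφ).imp hψ

theorem ex (hd : Primrec d) {φ : ∀ k, OrderFormula (d k + 1)} (hφ : PrimrecFamily φ) :
    PrimrecFamily fun k => (φ k).ex :=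
  not hd (all (not (Primrec.succ.comp hd) hφ))

theorem eq (hd : Primrec d) {x y : ∀ k, Fin (d k)} (hx : PrimrecVar x) (hy : PrimrecVar y) :
    PrimrecFamily fun k => eq (x k) (y k) :=
  inf hd (le hd hx hy) (le hd hy hx)

theorem joinCovers (hd : Primrec d) {w x y : ∀ k, Fin (d k)} (hw : PrimrecVar w)
    (hx : PrimrecVar x) (hy : PrimrecVar y) :
    PrimrecFamily fun k => joinCovers (w k) (x k) (y k) :=
  have hd' := Primrec.succ.comp hd
  have hl := primrecVar_last hd
  all (imp (le hd' hx.castSucc hl) (imp (le hd' hy.castSucc hl) (le hd' hw.castSucc hl)))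

theorem meetCovers (hd : Primrec d) {w x y : ∀ k, Fin (d k)} (hw : PrimrecVar w)
    (hx : PrimrecVar x) (hy : PrimrecVar y) :
    PrimrecFamily fun k => meetCovers (w k) (x k) (y k) :=
  have hd' := Primrec.succ.comp hd
  have hl := primrecVar_last hd
  all (imp (le hd' hl hx.castSucc) (imp (le hd' hl hy.castSucc) (le hd' hl hw.castSucc)))

theorem doublyPrime (hd : Primrec d) {x : ∀ k, Fin (d k)} (hx : PrimrecVar x) :
    PrimrecFamily fun k => doublyPrime (x k) :=
  have hd' := Primrec.succ.comp hd
  have hd'' := Primrec.succ.comp hd'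
  have ha := (primrecVar_last hd).castSucc
  have hb := primrecVar_last hd'
  have hx' := hx.castSucc.castSucc
  inf hd
    (all (all (imp (joinCovers hd'' hx' ha hb) (sup hd'' (le hd'' hx' ha) (le hd'' hx' hb)))))
    (all (all (imp (meetCovers hd'' hx' ha hb) (sup hd'' (le hd'' ha hx') (le hd'' hb hx')))))

theorem isNode (hd : Primrec d) {p : ∀ k, Fin 6 → Fin (d k)} {x : ∀ k, Fin (d k)}
    (hp : ∀ i, PrimrecVar fun k => p k i) (hx : PrimrecVar x) :
    PrimrecFamily fun k => isNode (p k) (x k) :=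
  inf hd (doublyPrime hd hx) (le hd hx (hp 1))

theorem hasChildren (hd : Primrec d) {p : ∀ k, Fin 6 → Fin (d k)} {z a b : ∀ k, Fin (d k)}
    (hp : ∀ i, PrimrecVar fun k => p k i) (hz : PrimrecVar z) (ha : PrimrecVar a)
    (hb : PrimrecVar b) : PrimrecFamily fun k => hasChildren (p k) (z k) (a k) (b k) :=
  have hd' := Primrec.succ.comp hd
  have hl := primrecVar_last hd
  ex hd (inf hd' (doublyPrime hd' hl) (inf hd' (joinCovers hd' (hp 2).castSucc hz.castSucc hl)
    (inf hd' (joinCovers hd' (hp 3).castSucc hl ha.castSucc)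
      (joinCovers hd' (hp 4).castSucc hl hb.castSucc))))

theorem matching (q : BPat) {d : ℕ → ℕ} (hd : Primrec d) {p : ∀ k, Fin 6 → Fin (d k)}
    {x : ∀ k, Fin 5 → Fin (d k)} {z : ∀ k, Fin (d k)} (hp : ∀ i, PrimrecVar fun k => p k i)
    (hx : ∀ i, PrimrecVar fun k => x k i) (hz : PrimrecVar z) :
    PrimrecFamily fun k => matching (p k) (x k) q (z k) := by
  induction q generalizing d with
  | var i => exact eq hd hz (hx i)
  | leaf => exact eq hd hz (hp 0)
  | node a b iha ihb =>
    have hd' := Primrec.succ.comp hd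
    have hd'' := Primrec.succ.comp hd'
    have ha := (primrecVar_last hd).castSucc
    have hb := primrecVar_last hd'
    have hp' := fun i => (hp i).castSucc.castSucc
    have hx' := fun i => (hx i).castSucc.castSucc
    exact ex hd (ex hd' (inf hd'' (isNode hd'' hp' ha) (inf hd'' (isNode hd'' hp' hb)
      (inf hd'' (hasChildren hd'' hp' hz.castSucc.castSucc ha hb)
        (inf hd'' (iha hd'' hp' hx' ha) (ihb hd'' hp' hx' hb))))))

theorem isReached (hd : Primrec d) {p : ∀ k, Fin 6 → Fin (d k)} {z : ∀ k, Fin (d k)}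
    (hp : ∀ i, PrimrecVar fun k => p k i) (hz : PrimrecVar z) :
    PrimrecFamily fun k => isReached (p k) (z k) :=
  inf hd (le hd hz (hp 5)) (isNode hd hp hz)

theorem childrenDetermine (hd : Primrec d) {p : ∀ k, Fin 6 → Fin (d k)}
    (hp : ∀ i, PrimrecVar fun k => p k i) : PrimrecFamily fun k => childrenDetermine (p k) :=
  have hd₁ := Primrec.succ.comp hd
  have hd₂ := Primrec.succ.comp hd₁
  have hd₃ := Primrec.succ.comp hd₂
  have hd₄ := Primrec.succ.comp hd₃
  have hp' := fun i => (hp i).castSucc.castSucc.castSucc.castSucc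
  have hz := (primrecVar_last hd).castSucc.castSucc.castSucc
  have hz' := (primrecVar_last hd₁).castSucc.castSucc
  have ha := (primrecVar_last hd₂).castSucc
  have hb := primrecVar_last hd₃
  all (all (all (all (imp (isNode hd₄ hp' hz) (imp (isNode hd₄ hp' hz')
    (imp (isNode hd₄ hp' ha) (imp (isNode hd₄ hp' hb) (imp (hasChildren hd₄ hp' hz ha hb)
      (imp (hasChildren hd₄ hp' hz' ha hb) (eq hd₄ hz hz'))))))))))

theorem closedUnder (hd : Primrec d) {p : ∀ k, Fin 6 → Fin (d k)}
    (hp : ∀ i, PrimrecVar fun k => p k i) (r : BPat × BPat) :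
    PrimrecFamily fun k => closedUnder (p k) r :=
  have hd₁ := Primrec.succ.comp hd
  have hd₂ := Primrec.succ.comp hd₁
  have hd₃ := Primrec.succ.comp hd₂
  have hd₄ := Primrec.succ.comp hd₃
  have hd₅ := Primrec.succ.comp hd₄
  have hd₆ := Primrec.succ.comp hd₅
  have hd₇ := Primrec.succ.comp hd₆
  have hp' := fun i => (hp i).castSucc.castSucc.castSucc.castSucc.castSucc.castSucc
  have hz := (primrecVar_last hd).castSucc.castSucc.castSucc.castSucc.castSucc
  have h₀ := (primrecVar_last hd₁).castSucc.castSucc.castSucc.castSucc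
  have h₁ := (primrecVar_last hd₂).castSucc.castSucc.castSucc
  have h₂ := (primrecVar_last hd₃).castSucc.castSucc
  have h₃ := (primrecVar_last hd₄).castSucc
  have h₄ := primrecVar_last hd₅
  have hl := primrecVar_last hd₆
  have hvec {D : ℕ → ℕ} {x₀ x₁ x₂ x₃ x₄ : ∀ k, Fin (D k)} (h₀ : PrimrecVar x₀)
      (h₁ : PrimrecVar x₁) (h₂ : PrimrecVar x₂) (h₃ : PrimrecVar x₃) (h₄ : PrimrecVar x₄) :
      ∀ i, PrimrecVar fun k => ![x₀ k, x₁ k, x₂ k, x₃ k, x₄ k] i := by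
    intro i
    fin_cases i
    exacts [h₀, h₁, h₂, h₃, h₄]
  all (all (all (all (all (all (imp (isReached hd₆ hp' hz) (imp (isNode hd₆ hp' h₀)
    (imp (isNode hd₆ hp' h₁) (imp (isNode hd₆ hp' h₂) (imp (isNode hd₆ hp' h₃)
      (imp (isNode hd₆ hp' h₄) (imp (matching r.1 hd₆ hp' (hvec h₀ h₁ h₂ h₃ h₄) hz)
        (ex hd₆ (inf hd₇ (isReached hd₇ (fun i => (hp' i).castSucc) hl)
          (matching r.2 hd₇ (fun i => (hp' i).castSucc) (hvec h₀.castSucc h₁.castSucc h₂.castSucc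
            h₃.castSucc h₄.castSucc) hl)))))))))))))))

theorem closedUnderAll (hd : Primrec d) {p : ∀ k, Fin 6 → Fin (d k)}
    (hp : ∀ i, PrimrecVar fun k => p k i) (rs : List (BPat × BPat)) :
    PrimrecFamily fun k => closedUnderAll (p k) rs := by
  induction rs with
  | nil => exact not hd (bot hd)
  | cons r rs ih => exact inf hd (closedUnder hd hp r) ih

theorem avoidsHaltOne (hd : Primrec d) {p : ∀ k, Fin 6 → Fin (d k)}
    (hp : ∀ i, PrimrecVar fun k => p k i) : PrimrecFamily fun k => avoidsHaltOne (p k) :=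
  have hd' := Primrec.succ.comp hd
  have hp' := fun i => (hp i).castSucc
  have hl := primrecVar_last hd
  all (imp (isReached hd' hp' hl) (not hd' (matching _ hd' hp' (fun _ => (hp 0).castSucc) hl)))

theorem noRunFromZero (c : Turing.ToPartrec.Code) (hd : Primrec d) {p : ∀ k, Fin 6 → Fin (d k)}
    {z : ∀ k, Fin (d k)} (hp : ∀ i, PrimrecVar fun k => p k i) (hz : PrimrecVar z) :
    PrimrecFamily fun k => noRunFromZero c (p k) (z k) :=
  have hd' := Primrec.succ.comp hd
  have hp' := fun i => (hp i).castSucc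
  have hl := primrecVar_last hd
  imp (childrenDetermine hd hp) (imp (closedUnderAll hd hp _) (imp (avoidsHaltOne hd hp)
    (all (imp (isReached hd' hp' hl) (not hd' (matching _ hd' hp' (fun _ => hz.castSucc) hl))))))

theorem isSucc (hd : Primrec d) {p : ∀ k, Fin 6 → Fin (d k)} {z z' : ∀ k, Fin (d k)}
    (hp : ∀ i, PrimrecVar fun k => p k i) (hz : PrimrecVar z) (hz' : PrimrecVar z') :
    PrimrecFamily fun k => isSucc (p k) (z k) (z' k) :=
  matching _ hd hp (fun _ => hz) hz'

end PrimrecFamily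

end Primrec

/-- The variables for the parameters, in formulas with at least `7` variables. -/
def params (k : ℕ) (i : Fin 6) : Fin (7 + k) := ⟨i, by omega⟩

/-- The last variable of a formula with at least `7` variables. -/
def current (k : ℕ) : Fin (7 + k) := ⟨6 + k, by omega⟩

/-- The codes of the symbols contributed by one successor step to `noRunFrom`. -/
def stepCodes (k : ℕ) : List ℕ :=
  7 :: 3 :: codes (isSucc (fun i => (params k i).castSucc) (current k).castSucc (Fin.last (7 + k)))

/-- The codes of the symbols of `noRunFrom c 0`. -/
def haltCodes (c : Turing.ToPartrec.Code) (k : ℕ) : List ℕ :=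
  codes (noRunFromZero c (params k) (current k))

theorem codes_noRunFrom (c : Turing.ToPartrec.Code) (m k : ℕ) :
    codes (noRunFrom c m (params k) (current k)) =
      ((List.range m).flatMap fun j => stepCodes (k + j)) ++ haltCodes c (k + m) := by
  induction m generalizing k with
  | zero => simp [noRunFrom, haltCodes]
  | succ m ih =>
    have h : Fin.last (7 + k) = current (k + 1) := Fin.ext (by simp [current]; omega)
    have h' := ih (k + 1)
    simp only [Nat.add_assoc, Nat.add_comm 1, ← h] at h'
    rw [noRunFrom, codes_all, codes_imp]
    refine (congrArg (fun l => 7 :: 3 :: (_ ++ l)) h').trans ?_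
    simp only [List.range_succ_eq_map, List.flatMap_cons, List.flatMap_map, List.append_assoc]
    rfl

theorem primrec_encode_noRun (c : Turing.ToPartrec.Code) :
    Primrec fun k => Encodable.encode (noRun c k) := by
  simp only [encode_sentence]
  refine Primrec.encode.comp ?_
  have hd : Primrec fun k => 7 + k := Primrec.nat_add.comp (Primrec.const 7) Primrec.id
  have hp (i : Fin 6) : PrimrecVar fun k => params k i := Primrec.const _
  have hz : PrimrecVar current := Primrec.nat_add.comp (Primrec.const 6) Primrec.id
  have hs : Primrec stepCodes :=
    Primrec.list_cons.comp (Primrec.const 7) <| Primrec.list_cons.comp (Primrec.const 3) <|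
      PrimrecFamily.isSucc (Primrec.succ.comp hd) (fun i => (hp i).castSucc) hz.castSucc
        (primrecVar_last hd)
  have key : Primrec fun k => codes (noRunFrom c k (params 0) (current 0)) := by
    simp only [codes_noRunFrom, Nat.zero_add]
    exact Primrec.list_append.comp
      (Primrec.list_flatMap Primrec.list_range (hs.comp Primrec.snd).to₂)
      (show Primrec (haltCodes c) from PrimrecFamily.noRunFromZero c hd hp hz)
  have hcons {f : ℕ → List ℕ} (a : ℕ) (hf : Primrec f) : Primrec fun k => a :: f k :=
    Primrec.list_cons.comp (Primrec.const a) hf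
  simp only [noRun, BoundedFormula.alls, codes_all, codes_imp]
  exact hcons 7 <| hcons 7 <| hcons 7 <| hcons 7 <| hcons 7 <| hcons 7 <| hcons 7 <| hcons 3 <|
    Primrec.list_append.comp (Primrec.const _) key

end OrderFormula

/-- **Theorem (Statement 0).** The common first-order theory of free lattices is
undecidable: there is no computable function deciding, via the Gödel encoding, whether
a sentence in the language of posets is true in every free lattice. -/
theorem theory_of_free_lattices_undecidable :
    ¬ ∃ f : ℕ → Bool, Computable f ∧
      ∀ φ : Language.order.Sentence,
        f (Encodable.encode φ) = true ↔
          ∀ (X : Type u) (F : Type v) [Lattice F] (ι : X → F),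
            Nonempty X → IsFreeLatticeOn.{u, v, w} ι → F ⊨ φ := by
  rintro ⟨f, hf, h⟩
  obtain ⟨c, hc⟩ := exists_code_inseparable
  obtain ⟨n, hn⟩ := hc (fun k => f (Encodable.encode (OrderFormula.noRun c k)))
    (hf.comp (OrderFormula.primrec_encode_noRun c).to_comp)
  cases hb : f (Encodable.encode (OrderFormula.noRun c n)) with
  | false =>
    rw [hb] at hn
    refine Bool.false_ne_true (hb.symm.trans ((h _).2 fun X F _ ι _ _ => ?_))
    refine OrderFormula.realize_noRun.2 fun p => noRunFrom_of_mem_eval (m := 0) ?_ rfl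
    rwa [Nat.zero_add]
  | true =>
    rw [hb] at hn
    obtain ⟨p, hp⟩ := FreeLat.exists_not_noRunFrom.{v} hn
    exact hp (OrderFormula.realize_noRun.1 ((h _).1 hb _ _ _ ⟨⟨.leaf, 0⟩⟩
      FreeLat.isFreeLatticeOn.{u, v, w}) p)
end

section
/- The common first-order theory of finitely generated free lattices is undecidable: the set of sentences in the language of posets that are true in the free lattice on X for every finite nonempty set X is not decidable. -/
open FirstOrder FirstOrder.Language

attribute [local instance] FirstOrder.Language.orderStructure

universe u u' v v' w w'

/-! ### Coding relations on the doubly prime elements of a lattice -/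

namespace FreeLatticeTheory

section Coding

variable {F : Type v} [Lattice F]

/-- An element that is both join prime and meet prime. -/
def DoublyPrime (a : F) : Prop :=
  (∀ b c, a ≤ b ⊔ c → a ≤ b ∨ a ≤ c) ∧ ∀ b c, b ⊓ c ≤ a → b ≤ a ∨ c ≤ a

/-- The binary relation on doubly prime elements coded by `p`, relative to `t`. -/
def Coded (p t a b : F) : Prop :=
  DoublyPrime a ∧ DoublyPrime b ∧ ∃ z, DoublyPrime z ∧ a ⊓ z ≤ p ∧ z ⊓ b ≤ t

/-- The elements playing the role of numbers: `o` and everything above it in the relation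
coded by `s`. -/
def Num (s t o x : F) : Prop := x = o ∨ Coded s t o x

/-- The relation coded by `s`, restricted to numbers. -/
def Less (s t o x y : F) : Prop := Num s t o x ∧ Num s t o y ∧ Coded s t x y

/-- Immediate successors for `Less`. -/
def Next (s t o x y : F) : Prop := Less s t o x y ∧ ¬ ∃ z, Less s t o x z ∧ Less s t o z y

/-- `Represents s t o n x`: the element `x` is reached from `o` in `n` successor steps. -/
def Represents (s t o : F) : ℕ → F → Prop
  | 0, x => x = o
  | n + 1, x => ∃ w, Next s t o w x ∧ Represents s t o n w

/-- `Less` is a strict order. -/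
def IsOrdered (s t o : F) : Prop :=
  (∀ x y z, Less s t o x y → Less s t o y z → Less s t o x z) ∧ ∀ x, ¬ Less s t o x x

variable {s t o : F}

theorem Represents.num {n : ℕ} {x : F} (h : Represents s t o n x) : Num s t o x := by
  cases n with
  | zero => exact Or.inl h
  | succ n => obtain ⟨w, hw, -⟩ := h; exact hw.1.2.1

theorem IsOrdered.eq_zero_of_represents (hO : IsOrdered s t o) {n : ℕ}
    (h : Represents s t o n o) : n = 0 := by
  cases n with
  | zero => rfl
  | succ n =>
    obtain ⟨w, hw, -⟩ := h
    have hw := hw.1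
    rcases hw.1 with rfl | hc
    · exact (hO.2 _ hw).elim
    · exact (hO.2 _ (hO.1 _ _ _ ⟨hw.2.1, hw.1, hc⟩ hw)).elim

theorem IsOrdered.exists_represents_lt (hO : IsOrdered s t o) {n : ℕ} {y : F}
    (h : Represents s t o n y) {k : ℕ} (hk : k < n) :
    ∃ x, Represents s t o k x ∧ Less s t o x y := by
  induction n generalizing y with
  | zero => omega
  | succ n ih =>
    obtain ⟨w, hw, hr⟩ := h
    rcases Nat.lt_succ_iff_lt_or_eq.1 hk with hk | rfl
    · obtain ⟨x, hx, hl⟩ := ih hr hk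
      exact ⟨x, hx, hO.1 _ _ _ hl hw.1⟩
    · exact ⟨w, hr, hw.1⟩

theorem IsOrdered.exists_represents (hO : IsOrdered s t o) (hfin : {x : F | DoublyPrime x}.Finite)
    {y : F} (hy : Num s t o y) : ∃ n, Represents s t o n y := by
  have hN : {x : F | Num s t o x}.Finite := by
    refine (hfin.insert o).subset fun x hx => ?_
    rcases hx with h | h
    · exact Or.inl h
    · exact Or.inr h.2.1
  have : Finite {x : F // Num s t o x} := hN
  let r : {x : F // Num s t o x} → {x : F // Num s t o x} → Prop := fun x y => Less s t o x y
  have : IsTrans _ r := ⟨fun x y z => hO.1 x y z⟩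
  have : Std.Irrefl r := ⟨fun x => hO.2 x⟩
  have wf : WellFounded r := Finite.wellFounded_of_trans_of_irrefl r
  have wf' : WellFounded (Function.swap r) := Finite.wellFounded_of_trans_of_irrefl _
  suffices ∀ y : {x : F // Num s t o x}, ∃ n, Represents s t o n (y : F) from this ⟨y, hy⟩
  intro y
  induction y using wf.induction with
  | _ y ih =>
    by_cases hyo : (y : F) = o
    · exact ⟨0, hyo⟩
    have hoy : r ⟨o, Or.inl rfl⟩ y := ⟨Or.inl rfl, y.2, y.2.resolve_left hyo⟩
    obtain ⟨m, hm, hmax⟩ := wf'.has_min {z | r z y} ⟨_, hoy⟩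
    obtain ⟨n, hn⟩ := ih m hm
    refine ⟨n + 1, m, ⟨hm, ?_⟩, hn⟩
    rintro ⟨z, h1, h2⟩
    exact hmax ⟨z, h1.2.1⟩ h2 h1

/-- The elements `g 0, …, g N` form a standard initial segment of the numbers, and every binary
relation on them is coded. -/
structure IsStandard (N : ℕ) (s t : F) (g : ℕ → F) : Prop where
  inj : ∀ i ≤ N, ∀ j ≤ N, g i = g j → i = j
  less : ∀ i ≤ N, ∀ z, Coded s t (g i) z ↔ ∃ j ≤ N, z = g j ∧ i < j
  code : ∀ R : ℕ → ℕ → Prop, ∃ p, ∀ i ≤ N, ∀ z, Coded p t (g i) z ↔ ∃ j ≤ N, z = g j ∧ R i j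

namespace IsStandard

variable {N : ℕ} {g : ℕ → F} (h : IsStandard N s t g)
include h

theorem num_iff {x : F} : Num s t (g 0) x ↔ ∃ i ≤ N, x = g i := by
  constructor
  · rintro (rfl | hx)
    · exact ⟨0, Nat.zero_le _, rfl⟩
    · obtain ⟨j, hj, rfl, -⟩ := (h.less 0 (Nat.zero_le _) _).1 hx
      exact ⟨j, hj, rfl⟩
  · rintro ⟨i, hi, rfl⟩
    rcases Nat.eq_zero_or_pos i with rfl | hp
    · exact Or.inl rfl
    · exact Or.inr ((h.less 0 (Nat.zero_le _) _).2 ⟨i, hi, rfl, hp⟩)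

theorem less_iff {x y : F} :
    Less s t (g 0) x y ↔ ∃ i j, i < j ∧ j ≤ N ∧ x = g i ∧ y = g j := by
  constructor
  · rintro ⟨hx, -, hc⟩
    obtain ⟨i, hi, rfl⟩ := h.num_iff.1 hx
    obtain ⟨j, hj, rfl, hij⟩ := (h.less i hi _).1 hc
    exact ⟨i, j, hij, hj, rfl, rfl⟩
  · rintro ⟨i, j, hij, hj, rfl, rfl⟩
    exact ⟨h.num_iff.2 ⟨i, by omega, rfl⟩, h.num_iff.2 ⟨j, hj, rfl⟩,
      (h.less i (by omega) _).2 ⟨j, hj, rfl, hij⟩⟩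

theorem isOrdered : IsOrdered s t (g 0) := by
  constructor
  · intro x y z hxy hyz
    obtain ⟨i, j, hij, hj, rfl, rfl⟩ := h.less_iff.1 hxy
    obtain ⟨j', k, hjk, hk, he, rfl⟩ := h.less_iff.1 hyz
    have := h.inj j hj j' (by omega) he
    exact h.less_iff.2 ⟨i, k, by omega, hk, rfl, rfl⟩
  · intro x hx
    obtain ⟨i, j, hij, hj, rfl, he⟩ := h.less_iff.1 hx
    have := h.inj i (by omega) j hj he
    omega

theorem next_iff {x y : F} :
    Next s t (g 0) x y ↔ ∃ i, i + 1 ≤ N ∧ x = g i ∧ y = g (i + 1) := by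
  constructor
  · rintro ⟨hl, hn⟩
    obtain ⟨i, j, hij, hj, rfl, rfl⟩ := h.less_iff.1 hl
    obtain rfl : j = i + 1 := by
      by_contra hne
      exact hn ⟨g (i + 1), h.less_iff.2 ⟨i, i + 1, by omega, by omega, rfl, rfl⟩,
        h.less_iff.2 ⟨i + 1, j, by omega, hj, rfl, rfl⟩⟩
    exact ⟨i, hj, rfl, rfl⟩
  · rintro ⟨i, hi, rfl, rfl⟩
    refine ⟨h.less_iff.2 ⟨i, i + 1, by omega, hi, rfl, rfl⟩, ?_⟩
    rintro ⟨z, h1, h2⟩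
    obtain ⟨a, b, hab, hb, e1, rfl⟩ := h.less_iff.1 h1
    obtain ⟨c, d, hcd, hd, e2, e3⟩ := h.less_iff.1 h2
    have := h.inj _ (by omega) _ (by omega) e1
    have := h.inj _ (by omega) _ (by omega) e2
    have := h.inj _ (by omega) _ (by omega) e3
    omega

theorem represents {n : ℕ} (hn : n ≤ N) : Represents s t (g 0) n (g n) := by
  induction n with
  | zero => rfl
  | succ n ih => exact ⟨g n, h.next_iff.2 ⟨n, hn, rfl, rfl⟩, ih (by omega)⟩

end IsStandard

end Coding

/-! ### Concrete free lattices -/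

/-- Lattice words over a set of letters. -/
inductive Word.{a} (X : Type) : Type a
  | var : X → Word X
  | sup : Word X → Word X → Word X
  | inf : Word X → Word X → Word X

namespace Word

variable {X : Type}

/-- The least preorder on words making `sup` and `inf` suprema and infima. -/
inductive Le : Word.{v} X → Word.{v} X → Prop
  | refl a : Le a a
  | trans {a b c} : Le a b → Le b c → Le a c
  | le_sup_left a b : Le a (sup a b)
  | le_sup_right a b : Le b (sup a b)
  | sup_le {a b c} : Le a c → Le b c → Le (sup a b) c
  | inf_le_left a b : Le (inf a b) a
  | inf_le_right a b : Le (inf a b) b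
  | le_inf {a b c} : Le a b → Le a c → Le a (inf b c)

instance : Preorder (Word.{v} X) where
  le := Le
  le_refl := Le.refl
  le_trans _ _ _ := Le.trans

/-- The value of a word in a lattice. -/
def eval {L : Type w} [Lattice L] (f : X → L) : Word.{v} X → L
  | var x => f x
  | sup a b => eval f a ⊔ eval f b
  | inf a b => eval f a ⊓ eval f b

theorem eval_mono {L : Type w} [Lattice L] (f : X → L) : Monotone (eval.{v} f) := by
  intro a b h
  induction h with
  | refl => exact le_rfl
  | trans _ _ h1 h2 => exact h1.trans h2
  | le_sup_left => exact le_sup_left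
  | le_sup_right => exact le_sup_right
  | sup_le _ _ h1 h2 => exact sup_le h1 h2
  | inf_le_left => exact inf_le_left
  | inf_le_right => exact inf_le_right
  | le_inf _ _ h1 h2 => exact le_inf h1 h2

end Word

/-- The free lattice on `X`. -/
def Free (X : Type) : Type v := Antisymmetrization (Word.{v} X) (· ≤ ·)

namespace Free

variable {X : Type}

instance : PartialOrder (Free.{v} X) :=
  inferInstanceAs (PartialOrder (Antisymmetrization (Word.{v} X) (· ≤ ·)))

/-- The class of a word. -/
def mk (a : Word.{v} X) : Free.{v} X := toAntisymmetrization (· ≤ ·) a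

theorem mk_le_mk {a b : Word.{v} X} : mk a ≤ mk b ↔ a ≤ b := Iff.rfl

theorem mk_surjective : Function.Surjective (mk : Word.{v} X → Free.{v} X) :=
  Quotient.mk_surjective

instance : Lattice (Free.{v} X) where
  sup := Quotient.map₂ Word.sup fun _ _ h _ _ h' =>
    ⟨.sup_le (h.1.trans (.le_sup_left _ _)) (h'.1.trans (.le_sup_right _ _)),
      .sup_le (h.2.trans (.le_sup_left _ _)) (h'.2.trans (.le_sup_right _ _))⟩
  inf := Quotient.map₂ Word.inf fun _ _ h _ _ h' =>
    ⟨.le_inf (.trans (.inf_le_left _ _) h.1) (.trans (.inf_le_right _ _) h'.1),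
      .le_inf (.trans (.inf_le_left _ _) h.2) (.trans (.inf_le_right _ _) h'.2)⟩
  le_sup_left := by rintro ⟨a⟩ ⟨b⟩; exact Word.Le.le_sup_left a b
  le_sup_right := by rintro ⟨a⟩ ⟨b⟩; exact Word.Le.le_sup_right a b
  sup_le := by rintro ⟨a⟩ ⟨b⟩ ⟨c⟩; exact Word.Le.sup_le
  inf_le_left := by rintro ⟨a⟩ ⟨b⟩; exact Word.Le.inf_le_left a b
  inf_le_right := by rintro ⟨a⟩ ⟨b⟩; exact Word.Le.inf_le_right a b
  le_inf := by rintro ⟨a⟩ ⟨b⟩ ⟨c⟩; exact Word.Le.le_inf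

/-- The generators. -/
def of (x : X) : Free.{v} X := mk (.var x)

@[elab_as_elim]
theorem induction {P : Free.{v} X → Prop} (var : ∀ x, P (of x))
    (sup : ∀ a b, P a → P b → P (a ⊔ b)) (inf : ∀ a b, P a → P b → P (a ⊓ b))
    (a : Free.{v} X) : P a := by
  obtain ⟨a, rfl⟩ := mk_surjective a
  induction a with
  | var x => exact var x
  | sup a b ha hb => exact sup _ _ ha hb
  | inf a b ha hb => exact inf _ _ ha hb

/-- The homomorphism extending a map on the generators. -/
def lift {L : Type w} [Lattice L] (f : X → L) : LatticeHom (Free.{v} X) L where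
  toFun := Quotient.lift (Word.eval f) fun _ _ h =>
    le_antisymm (Word.eval_mono f h.1) (Word.eval_mono f h.2)
  map_sup' := by rintro ⟨a⟩ ⟨b⟩; rfl
  map_inf' := by rintro ⟨a⟩ ⟨b⟩; rfl

@[simp]
theorem lift_of {L : Type w} [Lattice L] (f : X → L) (x : X) : lift f (of.{v} x) = f x := rfl

theorem isFreeLatticeOn {Y : Type u} (e : Y ≃ X) :
    IsFreeLatticeOn.{u, v, w} fun y => (of (e y) : Free.{v} X) := by
  intro L _ f
  refine ⟨lift (f ∘ e.symm), fun y => by simp, fun h hh => ?_⟩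
  refine DFunLike.ext _ _ fun a => ?_
  induction a using Free.induction with
  | var x => simpa using hh (e.symm x)
  | sup a b ha hb => rw [map_sup, map_sup, ha, hb]
  | inf a b ha hb => rw [map_inf, map_inf, ha, hb]

/-- The homomorphism to truth values sending the generators in `S` to `True`. -/
theorem lift_prop_of_le {S : X → Prop} {a b : Free.{v} X} (h : a ≤ b) (ha : lift S a) :
    lift S b :=
  OrderHomClass.mono (lift S) h ha

theorem of_le_iff {x : X} {a : Free.{v} X} : of x ≤ a ↔ lift (fun y => y = x) a := by
  refine ⟨fun h => lift_prop_of_le h (by simp), ?_⟩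
  induction a using Free.induction with
  | var y => rintro (rfl : y = x); exact le_rfl
  | sup a b ha hb =>
    rw [map_sup]
    rintro (h | h)
    · exact le_sup_of_le_left (ha h)
    · exact le_sup_of_le_right (hb h)
  | inf a b ha hb =>
    rw [map_inf]
    rintro ⟨h, h'⟩
    exact le_inf (ha h) (hb h')

theorem le_of_iff {x : X} {a : Free.{v} X} : a ≤ of x ↔ ¬ lift (fun y => y ≠ x) a := by
  refine ⟨fun h h' => lift_prop_of_le h h' rfl, ?_⟩
  induction a using Free.induction with
  | var y =>
    intro h
    obtain rfl : y = x := by simpa using h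
    exact le_rfl
  | sup a b ha hb =>
    rw [map_sup]
    intro h
    exact sup_le (ha fun h' => h (Or.inl h')) (hb fun h' => h (Or.inr h'))
  | inf a b ha hb =>
    rw [map_inf]
    intro h
    rcases not_and_or.1 h with h | h
    · exact inf_le_of_left_le (ha h)
    · exact inf_le_of_right_le (hb h)

theorem of_injective : Function.Injective (of : X → Free.{v} X) := fun x y h => by
  have : lift (fun z => z = x) (of.{v} y) := of_le_iff.1 h.le
  exact (show y = x from this).symm

theorem doublyPrime_iff {a : Free.{v} X} : DoublyPrime a ↔ ∃ x, a = of x := by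
  constructor
  · intro h
    induction a using Free.induction with
    | var x => exact ⟨x, rfl⟩
    | sup a b ha hb =>
      rcases h.1 a b le_rfl with h' | h'
      · rw [le_antisymm h' le_sup_left] at h ⊢; exact ha h
      · rw [le_antisymm h' le_sup_right] at h ⊢; exact hb h
    | inf a b ha hb =>
      rcases h.2 a b le_rfl with h' | h'
      · rw [← le_antisymm h' inf_le_left] at h ⊢; exact ha h
      · rw [← le_antisymm h' inf_le_right] at h ⊢; exact hb h
  · rintro ⟨x, rfl⟩
    refine ⟨fun b c => ?_, fun b c => ?_⟩
    · rw [of_le_iff, of_le_iff, of_le_iff, map_sup]; exact id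
    · rw [le_of_iff, le_of_iff, le_of_iff, map_inf]; exact not_and_or.1

/-- Every nonempty graph on finitely many generators is coded by an element. -/
theorem exists_inf_le_iff [Finite X] (E : X → X → Prop) (hE : ∃ a b, E a b) :
    ∃ p : Free.{v} X, ∀ x y, of x ⊓ of y ≤ p ↔
      ∃ a b, E a b ∧ (a = x ∨ a = y) ∧ (b = x ∨ b = y) := by
  classical
  have := Fintype.ofFinite X
  obtain ⟨a₀, b₀, h₀⟩ := hE
  let T : Finset (X × X) := Finset.univ.filter fun e => E e.1 e.2
  have hT : T.Nonempty := ⟨(a₀, b₀), by simpa [T] using h₀⟩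
  refine ⟨T.sup' hT fun e => of e.1 ⊓ of e.2, fun x y => ⟨fun h => ?_, ?_⟩⟩
  · by_contra hne
    have key : ¬ lift (fun z => z = x ∨ z = y)
        (T.sup' hT fun e => (of e.1 ⊓ of e.2 : Free.{v} X)) := by
      refine Finset.sup'_induction (p := fun c => ¬ lift (fun z => z = x ∨ z = y) c) hT _ ?_ ?_
      · intro a ha b hb
        rw [map_sup]
        rintro (h | h)
        exacts [ha h, hb h]
      · rintro ⟨a, b⟩ he
        rw [map_inf]
        rintro ⟨h1, h2⟩
        exact hne ⟨a, b, by simpa [T] using he, h1, h2⟩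
    refine key (lift_prop_of_le h ?_)
    rw [map_inf]
    exact ⟨Or.inl rfl, Or.inr rfl⟩
  · rintro ⟨a, b, hab, ha, hb⟩
    refine le_trans (le_inf ?_ ?_)
      (Finset.le_sup' (fun e : X × X => (of e.1 ⊓ of e.2 : Free.{v} X))
        (show (a, b) ∈ T by simpa [T] using hab))
    · rcases ha with rfl | rfl
      exacts [inf_le_left, inf_le_right]
    · rcases hb with rfl | rfl
      exacts [inf_le_left, inf_le_right]

/-- The free lattice on `N + 1` numbers, as many copies and as many spare letters contains a
standard initial segment of length `N`. -/
theorem exists_isStandard (N : ℕ) :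
    ∃ (s t : Free.{v} (Fin (N + 1) × Fin 3)) (g : ℕ → Free.{v} (Fin (N + 1) × Fin 3)),
      IsStandard N s t g := by
  obtain ⟨t, ht⟩ := exists_inf_le_iff.{v} (X := Fin (N + 1) × Fin 3)
    (fun x y => x.1 = y.1 ∧ x.2 = 0 ∧ y.2 = 1) ⟨(0, 0), (0, 1), by simp⟩
  let g : ℕ → Free.{v} (Fin (N + 1) × Fin 3) := fun i => of (Fin.ofNat (N + 1) i, 0)
  have inj : ∀ i ≤ N, ∀ j ≤ N, g i = g j → i = j := by
    intro i hi j hj h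
    have h := congrArg (fun x => (x.1 : ℕ)) (of_injective h)
    simpa [Nat.mod_eq_of_lt (Nat.lt_succ_of_le hi), Nat.mod_eq_of_lt (Nat.lt_succ_of_le hj)]
      using h
  have code : ∀ R : ℕ → ℕ → Prop, ∃ p, ∀ i ≤ N, ∀ z,
      Coded p t (g i) z ↔ ∃ j ≤ N, z = g j ∧ R i j := by
    intro R
    obtain ⟨p, hp⟩ := exists_inf_le_iff.{v} (X := Fin (N + 1) × Fin 3)
      (fun x y => (R x.1 y.1 ∧ x.2 = 0 ∧ y.2 = 1) ∨ (x.2 = 1 ∧ y.2 = 2))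
      ⟨(0, 1), (0, 2), by simp⟩
    refine ⟨p, fun i hi z => ?_⟩
    have hi' : ((Fin.ofNat (N + 1) i : Fin (N + 1)) : ℕ) = i := by
      simp [Nat.mod_eq_of_lt (Nat.lt_succ_of_le hi)]
    constructor
    · rintro ⟨-, hz, w, hw, h1, h2⟩
      obtain ⟨⟨z, k⟩, rfl⟩ := doublyPrime_iff.1 hz
      obtain ⟨⟨w, l⟩, rfl⟩ := doublyPrime_iff.1 hw
      obtain ⟨⟨a, a'⟩, ⟨b, b'⟩, hE, h1⟩ := (hp _ _).1 h1
      obtain ⟨⟨c, c'⟩, ⟨d, d'⟩, hE', h2⟩ := (ht _ _).1 h2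
      simp only [Prod.mk.injEq] at h1 h2 hE hE'
      refine ⟨z, by omega, ?_, ?_⟩
      · have : k = 0 := by grind
        subst this
        simp [g]
      · have : (a : ℕ) = i := by grind
        have : b = z := by grind
        grind
    · rintro ⟨j, hj, rfl, hR⟩
      have hj' : ((Fin.ofNat (N + 1) j : Fin (N + 1)) : ℕ) = j := by
        simp [Nat.mod_eq_of_lt (Nat.lt_succ_of_le hj)]
      refine ⟨doublyPrime_iff.2 ⟨_, rfl⟩, doublyPrime_iff.2 ⟨_, rfl⟩, of (Fin.ofNat (N + 1) j, 1),
        doublyPrime_iff.2 ⟨_, rfl⟩, (hp _ _).2 ⟨_, _, Or.inl ?_, Or.inl rfl, Or.inr rfl⟩,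
        (ht _ _).2 ⟨_, _, ?_, Or.inr rfl, Or.inl rfl⟩⟩
      · rw [hi', hj']; exact ⟨hR, rfl, rfl⟩
      · exact ⟨rfl, rfl, rfl⟩
  obtain ⟨s, hs⟩ := code (· < ·)
  exact ⟨s, t, g, inj, hs, code⟩

end Free

theorem finite_doublyPrime {X : Type u} {F : Type v} [Lattice F] [Finite X] {ι : X → F}
    (h : IsFreeLatticeOn.{u, v, w} ι) : {a : F | DoublyPrime a}.Finite := by
  let hom : {a : F // DoublyPrime a} → LatticeHom F (ULift.{w} Prop) := fun a =>
    { toFun := fun b => ⟨a.1 ≤ b⟩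
      map_sup' := fun b c => ULift.ext _ _ <| propext
        ⟨a.2.1 b c, fun h => h.elim le_sup_of_le_left le_sup_of_le_right⟩
      map_inf' := fun b c => ULift.ext _ _ <| propext le_inf_iff }
  have hom_inj : Function.Injective fun (a : {a : F // DoublyPrime a}) (x : X) => a.1 ≤ ι x := by
    intro a b hab
    obtain ⟨k, -, hk⟩ := h (ULift.{w} Prop) fun x => ⟨a.1 ≤ ι x⟩
    have e : hom a = hom b := (hk (hom a) fun x => rfl).trans
      (hk (hom b) fun x => ULift.ext _ _ (congrFun hab x).symm).symm
    have e' (c : F) : (a.1 ≤ c) = (b.1 ≤ c) := congrArg ULift.down (DFunLike.congr_fun e c)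
    exact Subtype.ext (le_antisymm ((e' b.1).mpr le_rfl) ((e' a.1).mp le_rfl))
  exact Finite.of_injective _ hom_inj

end FreeLatticeTheory

/-! ### Uniform definability -/

namespace FreeLatticeTheory

/-- A predicate on tuples of elements of lattices is uniformly definable if it is defined by one
first-order formula in the language of posets in all lattices. -/
def UDef {α : Type} (P : ∀ (F : Type v) [Lattice F], (α → F) → Prop) : Prop :=
  ∃ φ : Language.order.Formula α, ∀ (F : Type v) [Lattice F] (e : α → F), φ.Realize e ↔ P F e

namespace UDef

variable {α : Type} {P Q : ∀ (F : Type v) [Lattice F], (α → F) → Prop}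

theorem congr (h : UDef P) (hPQ : ∀ (F : Type v) [Lattice F] (e : α → F), P F e ↔ Q F e) :
    UDef Q := by
  obtain ⟨φ, hφ⟩ := h
  exact ⟨φ, fun F _ e => (hφ F e).trans (hPQ F e)⟩

theorem le (a b : α) : UDef fun (_F : Type v) _ e => e a ≤ e b :=
  ⟨Language.order.leSymb.formula₂ (Term.var a) (Term.var b), fun F _ e => by
    rw [Formula.realize_rel₂]; rfl⟩

theorem eq (a b : α) : UDef fun (_F : Type v) _ e => e a = e b :=
  ⟨(Term.var a).equal (Term.var b), fun F _ e => by
    rw [Formula.realize_equal]; rfl⟩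

theorem not (hP : UDef P) : UDef fun F _ e => ¬ P F e := by
  obtain ⟨φ, hφ⟩ := hP
  exact ⟨φ.not, fun F _ e => (Formula.realize_not).trans (not_congr (hφ F e))⟩

theorem imp (hP : UDef P) (hQ : UDef Q) : UDef fun F _ e => P F e → Q F e := by
  obtain ⟨φ, hφ⟩ := hP
  obtain ⟨ψ, hψ⟩ := hQ
  exact ⟨φ.imp ψ, fun F _ e => (Formula.realize_imp).trans (imp_congr (hφ F e) (hψ F e))⟩

theorem and (hP : UDef P) (hQ : UDef Q) : UDef fun F _ e => P F e ∧ Q F e :=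
  (hP.imp hQ.not).not.congr fun F _ e => by tauto

theorem or (hP : UDef P) (hQ : UDef Q) : UDef fun F _ e => P F e ∨ Q F e :=
  (hP.not.imp hQ).congr fun F _ e => by tauto

theorem exs {β : Type} [Finite β] {Q : ∀ (F : Type v) [Lattice F], (α → F) → (β → F) → Prop}
    (hQ : UDef fun F _ (e : α ⊕ β → F) => Q F (fun a => e (.inl a)) fun b => e (.inr b)) :
    UDef fun F _ e => ∃ x, Q F e x := by
  obtain ⟨φ, hφ⟩ := hQ
  exact ⟨φ.iExs β, fun F _ e => (Formula.realize_iExs).trans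
    (exists_congr fun x => hφ F (Sum.elim e x))⟩

theorem ex {Q : ∀ (F : Type v) [Lattice F], (α → F) → F → Prop}
    (hQ : UDef fun F _ (e : α ⊕ Unit → F) => Q F (fun a => e (.inl a)) (e (.inr ()))) :
    UDef fun F _ e => ∃ x, Q F e x :=
  (exs (Q := fun F _ e x => Q F e (x ())) hQ).congr fun _ _ _ =>
    ⟨fun ⟨_, hx⟩ => ⟨_, hx⟩, fun ⟨x, hx⟩ => ⟨fun _ => x, hx⟩⟩

theorem all {Q : ∀ (F : Type v) [Lattice F], (α → F) → F → Prop}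
    (hQ : UDef fun F _ (e : α ⊕ Unit → F) => Q F (fun a => e (.inl a)) (e (.inr ()))) :
    UDef fun F _ e => ∀ x, Q F e x :=
  (ex (Q := fun F _ e x => ¬ Q F e x) hQ.not).not.congr fun F _ e => by simp

theorem forall_finite {β : Type} [Finite β] {Q : β → ∀ (F : Type v) [Lattice F], (α → F) → Prop}
    (hQ : ∀ b, UDef (Q b)) : UDef fun F _ e => ∀ b, Q b F e := by
  choose φ hφ using hQ
  exact ⟨Formula.iInf φ, fun F _ e => (Formula.realize_iInf).trans
    (forall_congr' fun b => hφ b F e)⟩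

theorem inf_le (a b c : α) : UDef fun (_F : Type v) _ e => e a ⊓ e b ≤ e c :=
  (all (Q := fun _ _ e x => x ≤ e a → x ≤ e b → x ≤ e c)
    ((le _ _).imp ((le _ _).imp (le _ _)))).congr fun _ _ _ =>
      ⟨fun h => h _ inf_le_left inf_le_right, fun h _ h1 h2 => (le_inf h1 h2).trans h⟩

theorem le_sup (a b c : α) : UDef fun (_F : Type v) _ e => e a ≤ e b ⊔ e c :=
  (all (Q := fun _ _ e x => e b ≤ x → e c ≤ x → e a ≤ x)
    ((le _ _).imp ((le _ _).imp (le _ _)))).congr fun _ _ _ =>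
      ⟨fun h => h _ le_sup_left le_sup_right, fun h _ h1 h2 => h.trans (sup_le h1 h2)⟩

theorem doublyPrime (a : α) : UDef fun (_F : Type v) _ e => DoublyPrime (e a) :=
  and (all (all ((le_sup _ _ _).imp ((le _ _).or (le _ _)))))
    (all (all ((inf_le _ _ _).imp ((le _ _).or (le _ _)))))

theorem coded (p t a b : α) : UDef fun (_F : Type v) _ e => Coded (e p) (e t) (e a) (e b) :=
  and (doublyPrime _) (and (doublyPrime _)
    (ex (and (doublyPrime _) (and (inf_le _ _ _) (inf_le _ _ _)))))

theorem num (s t o x : α) : UDef fun (_F : Type v) _ e => Num (e s) (e t) (e o) (e x) :=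
  or (eq _ _) (coded _ _ _ _)

theorem less (s t o x y : α) :
    UDef fun (_F : Type v) _ e => Less (e s) (e t) (e o) (e x) (e y) :=
  and (num _ _ _ _) (and (num _ _ _ _) (coded _ _ _ _))

theorem next (s t o x y : α) :
    UDef fun (_F : Type v) _ e => Next (e s) (e t) (e o) (e x) (e y) :=
  and (less _ _ _ _ _) (not (ex (and (less _ _ _ _ _) (less _ _ _ _ _))))

theorem isOrdered (s t o : α) : UDef fun (_F : Type v) _ e => IsOrdered (e s) (e t) (e o) :=
  and (all (all (all ((less _ _ _ _ _).imp ((less _ _ _ _ _).imp (less _ _ _ _ _))))))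
    (all (not (less _ _ _ _ _)))

end UDef

/-! ### Partial recursive functions are definable -/

open Filter Matrix

/-- A partial function on natural numbers is expressible if its graph is defined, uniformly in all
lattices, by a formula which is sound when the numbers are well ordered and complete in long enough
standard segments. -/
def Expressible {k : ℕ} (f : List.Vector ℕ k →. ℕ) : Prop :=
  ∃ R : ∀ (F : Type v) [Lattice F], F → F → F → (Fin k → F) → F → Prop,
    (∀ (β : Type) (s t o : β) (x : Fin k → β) (y : β),
      UDef fun F _ e => R F (e s) (e t) (e o) (fun i => e (x i)) (e y)) ∧
    (∀ (F : Type v) [Lattice F] (s t o : F), IsOrdered s t o → {a : F | DoublyPrime a}.Finite →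
      ∀ x y n, (∀ i, Represents s t o (n.get i) (x i)) → R F s t o x y →
        ∃ m ∈ f n, Represents s t o m y) ∧
    ∀ n m, m ∈ f n → ∀ᶠ N in atTop, ∀ (F : Type v) [Lattice F] (s t : F) (g : ℕ → F),
      IsStandard N s t g → R F s t (g 0) (fun i => g (n.get i)) (g m)

theorem comp_vecCons {α β : Type*} {k : ℕ} (e : α → β) (a : α) (x : Fin k → α) :
    (fun i => e (vecCons a x i)) = vecCons (e a) fun i => e (x i) :=
  funext fun i => by cases i using Fin.cases <;> rfl

theorem get_cons_eq_vecCons {β : Type*} {k : ℕ} (e : ℕ → β) (a : ℕ) (v : List.Vector ℕ k) :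
    (fun i => e ((a ::ᵥ v).get i)) = vecCons (e a) fun i => e (v.get i) :=
  funext fun i => by cases i using Fin.cases <;> simp

theorem represents_vecCons {F : Type v} [Lattice F] {s t o : F} {k a : ℕ} {v : List.Vector ℕ k}
    {b : F} {x : Fin k → F} (ha : Represents s t o a b)
    (hv : ∀ i, Represents s t o (v.get i) (x i)) (i : Fin (k + 1)) :
    Represents s t o ((a ::ᵥ v).get i) (vecCons b x i) := by
  cases i using Fin.cases with
  | zero => simpa using ha
  | succ i => simpa using hv i

theorem Expressible.zero : Expressible.{v} fun _ : List.Vector ℕ 0 => Part.some 0 :=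
  ⟨fun F _ _ _ o _ y => y = o, fun _ _ _ _ _ _ => UDef.eq _ _,
    fun F _ s t o _ _ x y n _ h => ⟨0, Part.mem_some _, h⟩,
    fun n m hm => .of_forall fun N F _ s t g hg => by rw [Part.mem_some_iff.1 hm]⟩

theorem Expressible.succ :
    Expressible.{v} fun v : List.Vector ℕ 1 => Part.some v.head.succ := by
  refine ⟨fun F _ s t o x y => Next s t o (x 0) y, fun _ _ _ _ _ _ => UDef.next _ _ _ _ _,
    fun F _ s t o _ _ x y n hx h => ⟨_, Part.mem_some _, x 0, h, ?_⟩, fun n m hm => ?_⟩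
  · simpa using hx 0
  · filter_upwards [eventually_ge_atTop (n.head + 1)] with N hN F _ s t g hg
    rw [Part.mem_some_iff.1 hm]
    exact hg.next_iff.2 ⟨n.head, hN, by simp, rfl⟩

theorem Expressible.get {k : ℕ} (i : Fin k) :
    Expressible.{v} fun v : List.Vector ℕ k => Part.some (v.get i) :=
  ⟨fun F _ _ _ o x y => y = x i, fun _ _ _ _ _ _ => UDef.eq _ _,
    fun F _ s t o _ _ x y n hx h => ⟨_, Part.mem_some _, h ▸ hx i⟩,
    fun n m hm => .of_forall fun N F _ s t g hg => by rw [Part.mem_some_iff.1 hm]⟩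

theorem mem_mOfFn_iff {α : Type*} {k : ℕ} {f : Fin k → Part α} {v : List.Vector α k} :
    v ∈ List.Vector.mOfFn f ↔ ∀ i, v.get i ∈ f i := by
  induction k with
  | zero => simp [List.Vector.mOfFn, Subsingleton.elim v List.Vector.nil]
  | succ k ih =>
    obtain ⟨a, v, rfl⟩ := v.exists_eq_cons
    simp only [List.Vector.mOfFn, Part.bind_eq_bind, Part.mem_bind_iff, Part.pure_eq_some,
      Part.mem_some_iff, Fin.forall_fin_succ, List.Vector.get_zero, List.Vector.head_cons,
      List.Vector.get_cons_succ, ← ih]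
    constructor
    · rintro ⟨b, hb, w, hw, h⟩
      obtain ⟨h1, h2⟩ := (List.Vector.eq_cons_iff _ _ _).1 h
      rw [List.Vector.head_cons] at h1
      rw [List.Vector.tail_cons] at h2
      exact ⟨h1 ▸ hb, h2 ▸ hw⟩
    · rintro ⟨ha, hv⟩
      exact ⟨a, ha, v, hv, rfl⟩

theorem Expressible.comp {m k : ℕ} {f : List.Vector ℕ k →. ℕ}
    {g : Fin k → List.Vector ℕ m →. ℕ} (hf : Expressible.{v} f) (hg : ∀ i, Expressible.{v} (g i)) :
    Expressible.{v} fun v => (List.Vector.mOfFn fun i => g i v) >>= f := by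
  obtain ⟨A, Adef, Asound, Acomp⟩ := hf
  choose B Bdef Bsound Bcomp using hg
  refine ⟨fun F _ s t o x y => ∃ z : Fin k → F, (∀ i, B i F s t o x (z i)) ∧ A F s t o z y,
    fun β s t o x y => UDef.exs (UDef.and (UDef.forall_finite fun i => Bdef i _ _ _ _ _ _)
      (Adef _ _ _ _ _ _)), ?_, ?_⟩
  · rintro F _ s t o hO hfin x y n hx ⟨z, hz, hy⟩
    choose r hr hr' using fun i => Bsound i F s t o hO hfin x (z i) n hx (hz i)
    obtain ⟨l, hl, hl'⟩ := Asound F s t o hO hfin z y (List.Vector.ofFn r) (by simpa using hr') hy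
    refine ⟨l, Part.mem_bind (a := List.Vector.ofFn r) ?_ hl, hl'⟩
    simpa [mem_mOfFn_iff] using hr
  · intro n l hl
    obtain ⟨r, hr, hl⟩ := Part.mem_bind_iff.1 hl
    have hr : ∀ i, r.get i ∈ g i n := mem_mOfFn_iff.1 hr
    filter_upwards [Acomp r l hl, eventually_all.2 fun i => Bcomp i n _ (hr i)]
      with N hA hB F _ s t e he
    exact ⟨fun i => e (r.get i), fun i => hB i F s t e he, hA F s t e he⟩

theorem Expressible.prec {k : ℕ} {f : List.Vector ℕ k → ℕ} {g : List.Vector ℕ (k + 2) → ℕ}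
    (hf : Expressible.{v} fun v => Part.some (f v))
    (hg : Expressible.{v} fun v => Part.some (g v)) :
    Expressible.{v} fun v : List.Vector ℕ (k + 1) => Part.some
      (v.head.rec (f v.tail) fun y IH => g (y ::ᵥ IH ::ᵥ v.tail) : ℕ) := by
  obtain ⟨A, Adef, Asound, Acomp⟩ := hf
  obtain ⟨B, Bdef, Bsound, Bcomp⟩ := hg
  refine ⟨fun F _ s t o x y => ∃ p,
    (∀ z, Coded p t o z → A F s t o (fun i => x i.succ) z) ∧
    (∀ a b z, Next s t o a b → Coded p t b z →
      ∃ c, Coded p t a c ∧ B F s t o (vecCons a (vecCons c fun i => x i.succ)) z) ∧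
    Coded p t (x 0) y, fun β s t o x y => ?_, ?_, ?_⟩
  · refine .ex (.and (.all (.imp (.coded _ _ _ _) (Adef _ _ _ _ _ _)))
      (.and (.all (.all (.all (.imp (.next _ _ _ _ _) (.imp (.coded _ _ _ _)
        (.ex (.and (.coded _ _ _ _) ?_))))))) (.coded _ _ _ _)))
    refine (Bdef _ (.inl (.inl (.inl (.inl (.inl s))))) (.inl (.inl (.inl (.inl (.inl t)))))
      (.inl (.inl (.inl (.inl (.inl o)))))
      (vecCons (.inl (.inl (.inl (.inr ())))) (vecCons (.inr ())
        fun i => (.inl (.inl (.inl (.inl (.inl (x i.succ)))))))) (.inl (.inr ()))).congr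
      fun F _ e => ?_
    rw [comp_vecCons, comp_vecCons]
  · rintro F _ s t o hO hfin x y n hx ⟨p, h0, h1, hy⟩
    have hx' : ∀ i, Represents s t o (n.tail.get i) (x i.succ) := fun i => by
      simpa using hx i.succ
    have key : ∀ (j : ℕ) (a z : F), Represents s t o j a → Coded p t a z →
        Represents s t o (j.rec (f n.tail) fun y IH => g (y ::ᵥ IH ::ᵥ n.tail)) z := by
      intro j
      induction j with
      | zero =>
        rintro a z rfl hz
        obtain ⟨l, hl, hl'⟩ := Asound F s t _ hO hfin _ z n.tail hx' (h0 z hz)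
        rwa [Part.mem_some_iff.1 hl] at hl'
      | succ j ih =>
        rintro b z ⟨a, hab, ha⟩ hz
        obtain ⟨c, hc, hB⟩ := h1 a b z hab hz
        obtain ⟨l, hl, hl'⟩ := Bsound F s t o hO hfin _ z _
          (represents_vecCons ha (represents_vecCons (ih a c ha hc) hx')) hB
        rwa [Part.mem_some_iff.1 hl] at hl'
    exact ⟨_, Part.mem_some _, key n.head (x 0) y (by simpa using hx 0) hy⟩
  · intro n m hm
    set r : ℕ → ℕ := fun j => j.rec (f n.tail) fun y IH => g (y ::ᵥ IH ::ᵥ n.tail) with hr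
    obtain rfl : m = r n.head := Part.mem_some_iff.1 hm
    have hA := Acomp n.tail _ (Part.mem_some _)
    have hB : ∀ᶠ N in atTop, ∀ j ∈ Finset.range n.head, ∀ (F : Type v) [Lattice F] (s t : F)
        (e : ℕ → F), IsStandard N s t e →
          B F s t (e 0) (fun i => e ((j ::ᵥ r j ::ᵥ n.tail).get i)) (e (r (j + 1))) :=
      (Filter.eventually_all_finset _).2 fun j _ => Bcomp _ _ (Part.mem_some _)
    have hle : ∀ᶠ N in atTop, ∀ j ∈ Finset.range (n.head + 1), j ≤ N ∧ r j ≤ N :=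
      (Filter.eventually_all_finset _).2 fun j _ =>
        (eventually_ge_atTop j).and (eventually_ge_atTop (r j))
    filter_upwards [hA, hB, hle] with N hA hB hle F _ s t e he
    have hle : ∀ j ≤ n.head, j ≤ N ∧ r j ≤ N := fun j hj =>
      hle j (Finset.mem_range.2 (Nat.lt_succ_of_le hj))
    have htail : (fun i : Fin k => e (n.get i.succ)) = fun i => e (n.tail.get i) := by
      simp
    obtain ⟨p, hp⟩ := he.code fun i j => i ≤ n.head ∧ j = r i
    refine ⟨p, fun z hz => ?_, fun a b z hab hz => ?_, ?_⟩
    · obtain ⟨j, -, rfl, -, rfl⟩ := (hp 0 (Nat.zero_le _) z).1 hz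
      rw [htail]
      exact hA F s t e he
    · obtain ⟨i, hi, rfl, rfl⟩ := he.next_iff.1 hab
      obtain ⟨j, -, rfl, hin, rfl⟩ := (hp _ hi z).1 hz
      have hri := (hle i (by omega)).2
      refine ⟨e (r i), (hp i (by omega) _).2 ⟨r i, hri, rfl, by omega, rfl⟩, ?_⟩
      rw [htail]
      have := hB i (Finset.mem_range.2 hin) F s t e he
      rwa [get_cons_eq_vecCons, get_cons_eq_vecCons] at this
    · have h0 : n.get 0 = n.head := by simp
      simp only [h0]
      exact (hp _ (hle _ le_rfl).1 _).2 ⟨_, (hle _ le_rfl).2, rfl, le_rfl, rfl⟩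

theorem Expressible.rfind {k : ℕ} {f : List.Vector ℕ (k + 1) → ℕ}
    (hf : Expressible.{v} fun v => Part.some (f v)) :
    Expressible.{v} fun v : List.Vector ℕ k =>
      Nat.rfind fun n => Part.some (decide (f (n ::ᵥ v) = 0)) := by
  obtain ⟨A, Adef, Asound, Acomp⟩ := hf
  refine ⟨fun F _ s t o x y => Num s t o y ∧ A F s t o (vecCons y x) o ∧
    ∀ a, Less s t o a y → ∃ z, A F s t o (vecCons a x) z ∧ z ≠ o, fun β s t o x y => ?_, ?_, ?_⟩
  · refine .and (.num _ _ _ _) (.and ?_ (.all (.imp (.less _ _ _ _ _)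
      (.ex (.and ?_ (.not (.eq _ _)))))))
    · refine (Adef _ s t o (vecCons y x) o).congr fun F _ e => ?_
      rw [comp_vecCons]
    · refine (Adef _ (.inl (.inl s)) (.inl (.inl t)) (.inl (.inl o))
        (vecCons (.inl (.inr ())) fun i => .inl (.inl (x i))) (.inr ())).congr fun F _ e => ?_
      rw [comp_vecCons]
  · rintro F _ s t o hO hfin x y n hx ⟨hy, h0, h1⟩
    obtain ⟨m, hm⟩ := hO.exists_represents hfin hy
    refine ⟨m, Nat.mem_rfind.2 ⟨?_, fun {j} hj => ?_⟩, hm⟩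
    · obtain ⟨l, hl, hl'⟩ := Asound F s t o hO hfin _ _ _ (represents_vecCons hm hx) h0
      have := hO.eq_zero_of_represents hl'
      rw [Part.mem_some_iff.1 hl] at this
      simp [this]
    · obtain ⟨a, ha, hay⟩ := hO.exists_represents_lt hm hj
      obtain ⟨z, hz, hzo⟩ := h1 a hay
      obtain ⟨l, hl, hl'⟩ := Asound F s t o hO hfin _ _ _ (represents_vecCons ha hx) hz
      have : f (j ::ᵥ n) ≠ 0 := by
        intro h
        rw [Part.mem_some_iff.1 hl, h] at hl'
        exact hzo hl'
      simp [this]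
  · intro n m hm
    obtain ⟨hm0, hlt⟩ := Nat.mem_rfind.1 hm
    have hm0 : f (m ::ᵥ n) = 0 := by simpa using hm0
    have hlt : ∀ j < m, f (j ::ᵥ n) ≠ 0 := fun j hj => by simpa using hlt hj
    have hA := Acomp (m ::ᵥ n) _ (Part.mem_some _)
    have hB : ∀ᶠ N in atTop, ∀ j ∈ Finset.range m, f (j ::ᵥ n) ≤ N ∧
        ∀ (F : Type v) [Lattice F] (s t : F) (e : ℕ → F), IsStandard N s t e →
          A F s t (e 0) (fun i => e ((j ::ᵥ n).get i)) (e (f (j ::ᵥ n))) :=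
      (Filter.eventually_all_finset _).2 fun j _ =>
        (eventually_ge_atTop _).and (Acomp _ _ (Part.mem_some _))
    filter_upwards [hA, hB, eventually_ge_atTop m] with N hA hB hle F _ s t e he
    refine ⟨he.num_iff.2 ⟨m, hle, rfl⟩, ?_, fun a ha => ?_⟩
    · have := hA F s t e he
      rwa [get_cons_eq_vecCons, hm0] at this
    · obtain ⟨i, j, hij, hj, rfl, hmj⟩ := he.less_iff.1 ha
      obtain rfl := he.inj m hle j hj hmj
      obtain ⟨h1, h2⟩ := hB i (Finset.mem_range.2 hij)
      refine ⟨_, ?_, fun h => hlt i hij (he.inj _ h1 0 (Nat.zero_le _) h)⟩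
      rw [← get_cons_eq_vecCons]
      exact h2 F s t e he

theorem expressible_of_primrec' {k : ℕ} {f : List.Vector ℕ k → ℕ} (hf : Nat.Primrec' f) :
    Expressible.{v} fun v => Part.some (f v) := by
  induction hf with
  | zero => exact .zero
  | succ => exact .succ
  | get i => exact .get i
  | comp g _ _ hf hg =>
    simpa [Vector.mOfFn_part_some] using Expressible.comp hf hg
  | prec _ _ hf hg => exact .prec hf hg

theorem expressible_of_partrec' {k : ℕ} {f : List.Vector ℕ k →. ℕ} (hf : Nat.Partrec' f) :
    Expressible.{v} f := by
  induction hf with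
  | prim hf => exact expressible_of_primrec' hf
  | comp g _ _ hf hg => exact .comp hf hg
  | rfind _ hf => exact .rfind hf

end FreeLatticeTheory

/-! ### Codes of the reduction sentences -/

namespace FreeLatticeTheory

/-- The symbols used in the codes of formulas. -/
abbrev Symbol : Type :=
  (Σ k, Language.order.Term (Empty ⊕ Fin k)) ⊕ ((Σ n, Language.order.Relations n) ⊕ ℕ)

/-- The codes of the symbols of a formula, in order. -/
def symbolCodes {n : ℕ} (φ : Language.order.BoundedFormula Empty n) : List ℕ :=
  φ.listEncode.map Encodable.encode

theorem encode_map_encode {α : Type*} [Encodable α] (l : List α) :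
    Encodable.encode (l.map Encodable.encode) = Encodable.encode l := by
  induction l with
  | nil => rfl
  | cons a l ih => simp [ih]

theorem encode_sentence (φ : Language.order.Sentence) :
    Encodable.encode φ = Encodable.encode (symbolCodes (n := 0) φ) :=
  (encode_map_encode _).symm

/-- The code of a bound variable, viewed as a term. -/
def varCode (k i : ℕ) : ℕ := 2 * Nat.pair k (Nat.pair (2 * (2 * i + 1)) 0 + 1)

theorem encode_var {k : ℕ} (i : Fin k) :
    Encodable.encode (Sum.inl ⟨k, Term.var (Sum.inr i)⟩ : Symbol) = varCode k i := rfl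

theorem primrec_varCode : Primrec₂ varCode := by
  have h2 {f : ℕ × ℕ → ℕ} (hf : Primrec f) : Primrec fun p => 2 * f p :=
    Primrec.nat_mul.comp (.const 2) hf
  exact h2 (Primrec₂.natPair.comp .fst (Primrec.succ.comp (Primrec₂.natPair.comp
    (h2 (Primrec.succ.comp (h2 .snd))) (.const 0))))

theorem primrec_encode_relabel {α : Type} {k : ℕ} {N : ℕ → ℕ} (hN : Primrec N)
    {g : ∀ j, α → Empty ⊕ Fin (N j)} {p : α → ℕ → ℕ} (hp : ∀ a, Primrec (p a))
    (hg : ∀ j a, ∃ h, g j a = Sum.inr ⟨p a j, h⟩) (t : Language.order.Term (α ⊕ Fin k)) :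
    Primrec fun j => Encodable.encode
      (Sum.inl ⟨N j + k, t.relabel (BoundedFormula.relabelAux (g j) k)⟩ : Symbol) := by
  have hk : Primrec fun j => N j + k := Primrec.nat_add.comp hN (.const k)
  rcases t with (a | i) | ⟨f, -⟩
  · refine (primrec_varCode.comp hk (hp a)).of_eq fun j => ?_
    obtain ⟨h, hj⟩ := hg j a
    have : BoundedFormula.relabelAux (g j) k (.inl a) =
        Sum.inr (Fin.castAdd k (⟨p a j, h⟩ : Fin (N j))) := by
      simp [BoundedFormula.relabelAux, hj]
    rw [Term.relabel, this, encode_var]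
    rfl
  · refine (primrec_varCode.comp hk (Primrec.nat_add.comp hN (.const (i : ℕ)))).of_eq fun j => ?_
    have : BoundedFormula.relabelAux (g j) k (.inr i) = Sum.inr (Fin.natAdd (N j) i) := by
      simp [BoundedFormula.relabelAux]
    rw [Term.relabel, this, encode_var]
    rfl
  · exact isEmptyElim f

theorem primrec_symbolCodes_relabel {α : Type} {k : ℕ} {N : ℕ → ℕ} (hN : Primrec N)
    {g : ∀ j, α → Empty ⊕ Fin (N j)} {p : α → ℕ → ℕ} (hp : ∀ a, Primrec (p a))
    (hg : ∀ j a, ∃ h, g j a = Sum.inr ⟨p a j, h⟩) (φ : Language.order.BoundedFormula α k) :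
    Primrec fun j => symbolCodes (φ.relabel (g j)) := by
  have ht {k : ℕ} (t : Language.order.Term (α ⊕ Fin k)) := primrec_encode_relabel hN hp hg t
  have hnat {f : ℕ → ℕ} (hf : Primrec f) : Primrec fun j => 2 * (2 * f j + 1) + 1 := by
    have h {f : ℕ → ℕ} (hf : Primrec f) : Primrec fun j => 2 * f j + 1 :=
      Primrec.succ.comp (Primrec.nat_mul.comp (.const 2) hf)
    exact h (h hf)
  induction φ with
  | @falsum k =>
    have h : Primrec fun j => 2 * (2 * (N j + k + 2) + 1) + 1 :=
      hnat (Primrec.nat_add.comp (Primrec.nat_add.comp hN (.const k)) (.const 2))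
    exact Primrec.list_cons.comp h (.const [])
  | equal t u =>
    exact Primrec.list_cons.comp (ht t) (Primrec.list_cons.comp (ht u) (.const []))
  | @rel k l R ts =>
    refine (Primrec.list_cons.comp
      (.const (Encodable.encode (Sum.inr (Sum.inl ⟨l, R⟩) : Symbol)))
      (Primrec.list_cons.comp (hnat (Primrec.nat_add.comp hN (.const k)))
      (Primrec.list_ofFn fun i => ht (ts i)))).of_eq fun j => ?_
    rw [symbolCodes, BoundedFormula.relabel, BoundedFormula.mapTermRel,
      BoundedFormula.listEncode, List.map_append, List.map_map, ← List.ofFn_eq_map]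
    rfl
  | imp φ ψ hφ hψ =>
    refine (Primrec.list_cons.comp (.const (Encodable.encode (Sum.inr (Sum.inr 0) : Symbol)))
      (Primrec.list_append.comp hφ hψ)).of_eq fun j => ?_
    simp [symbolCodes, BoundedFormula.listEncode]
  | all φ hφ =>
    refine (Primrec.list_cons.comp (.const (Encodable.encode (Sum.inr (Sum.inr 1) : Symbol)))
      hφ).of_eq fun j => ?_
    rw [BoundedFormula.relabel_all]
    rfl

/-- The bound variables of a formula in `m` free variables at level `j`: the first three are
global, the others are shifted. -/
def levelIndex (m j : ℕ) (i : Fin m) : Fin (j + m) :=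
  ⟨if i.1 < 3 then i else j + i, by split_ifs <;> omega⟩

/-- A formula in `m` free variables, moved to level `j`. -/
def atLevel {m : ℕ} (φ : Language.order.Formula (Fin m)) (j : ℕ) :
    Language.order.BoundedFormula Empty (j + m) :=
  BoundedFormula.relabel (fun i => Sum.inr (levelIndex m j i)) φ

theorem primrec_symbolCodes_atLevel {m : ℕ} (φ : Language.order.Formula (Fin m)) :
    Primrec fun j => symbolCodes (atLevel φ j) :=
  primrec_symbolCodes_relabel (N := fun j => j + m) (Primrec.nat_add.comp .id (.const m))
    (p := fun (i : Fin m) j => if i.1 < 3 then i else j + i)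
    (fun i => by
      by_cases hi : i.1 < 3
      · simpa [hi] using Primrec.const (i : ℕ)
      · simpa [hi] using Primrec.nat_add.comp .id (.const (i : ℕ)))
    (fun j i => ⟨_, rfl⟩) φ

theorem realize_atLevel {F : Type v} [Language.order.Structure F] {m j : ℕ}
    {φ : Language.order.Formula (Fin m)} {e : Empty → F} {x : Fin (j + m) → F} :
    (atLevel φ j).Realize e x ↔ φ.Realize fun i => x (levelIndex m j i) := by
  rw [Formula.Realize, atLevel]
  refine BoundedFormula.realize_relabel.trans ?_
  exact iff_of_eq (congrArg _ (Subsingleton.elim _ _))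

/-- The formula stating that no chain of `n` steps `S` leads from the last variable to an element
satisfying `E`. -/
def chain (S : Language.order.Formula (Fin 5)) (E : Language.order.Formula (Fin 4)) :
    ℕ → ∀ j : ℕ, Language.order.BoundedFormula Empty (j + 4)
  | 0, j => atLevel E j
  | n + 1, j => BoundedFormula.all (n := j + 4) ((atLevel S j).imp (chain S E n (j + 1)))

theorem symbolCodes_chain (S : Language.order.Formula (Fin 5)) (E : Language.order.Formula (Fin 4))
    (n j : ℕ) : symbolCodes (chain S E n j) = (List.range n).flatMap (fun i =>
      Encodable.encode (Sum.inr (Sum.inr 1) : Symbol) ::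
        Encodable.encode (Sum.inr (Sum.inr 0) : Symbol) :: symbolCodes (atLevel S (j + i))) ++
      symbolCodes (atLevel E (j + n)) := by
  induction n generalizing j with
  | zero => rfl
  | succ n ih =>
    have h : symbolCodes (chain S E (n + 1) j) =
        Encodable.encode (Sum.inr (Sum.inr 1) : Symbol) ::
        Encodable.encode (Sum.inr (Sum.inr 0) : Symbol) ::
        (symbolCodes (atLevel S j) ++ symbolCodes (chain S E n (j + 1))) := by
      rw [symbolCodes, chain, BoundedFormula.listEncode, BoundedFormula.listEncode, List.map_cons,
        List.cons_append, List.map_cons, List.map_append]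
      rfl
    have h' {m : ℕ} (φ : Language.order.Formula (Fin m)) (i : ℕ) :
        symbolCodes (atLevel φ (j + 1 + i)) = symbolCodes (atLevel φ (j + (i + 1))) :=
      congrArg (fun j => symbolCodes (atLevel φ j)) (by omega)
    rw [h, ih, List.range_succ_eq_map]
    simp only [List.flatMap_cons, List.flatMap_map, Nat.add_zero, List.cons_append,
      List.append_assoc, Nat.succ_eq_add_one, h']

theorem realize_chain {S : Language.order.Formula (Fin 5)} {E : Language.order.Formula (Fin 4)}
    {F : Type v} [Lattice F]
    (hS : ∀ e : Fin 5 → F, S.Realize e ↔ Next (e 0) (e 1) (e 2) (e 4) (e 3))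
    (hE : ∀ e : Fin 4 → F, E.Realize e ↔ ¬ e 3 = e 2) {n j : ℕ} {e : Empty → F}
    {x : Fin (j + 4) → F} {y : Fin 4 → F} (hy : ∀ i, x (levelIndex 4 j i) = y i) :
    (chain S E n j).Realize e x ↔ ¬ Represents (y 0) (y 1) (y 2) n (y 3) := by
  induction n generalizing j y with
  | zero =>
    rw [chain, realize_atLevel, hE, hy, hy]
    rfl
  | succ n ih =>
    rw [chain, BoundedFormula.realize_all, Represents, not_exists]
    refine forall_congr' fun w => ?_
    have hlt (i : Fin 4) : (Fin.snoc x w : Fin (j + 5) → F) (levelIndex 5 j i.castSucc) = y i := by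
      have : levelIndex 5 j i.castSucc = (levelIndex 4 j i).castSucc := rfl
      rw [this, ← hy]
      exact Fin.snoc_castSucc ..
    have hlast : (Fin.snoc x w : Fin (j + 5) → F) (levelIndex 5 j 4) = w := Fin.snoc_last ..
    rw [BoundedFormula.realize_imp, realize_atLevel, hS, not_and]
    refine imp_congr ?_ ((ih (y := ![y 0, y 1, y 2, w]) fun i => ?_).trans Iff.rfl)
    · rw [hlast]
      exact iff_of_eq (by rw [← hlt 0, ← hlt 1, ← hlt 2, ← hlt 3]; rfl)
    · fin_cases i
      · exact hlt 0
      · exact hlt 1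
      · exact hlt 2
      · exact hlast

/-- The sentence stating that if `A` holds then no chain of `n` steps `S` leads from the last
variable to an element satisfying `E`. -/
def reduction (A : Language.order.Formula (Fin 4)) (S : Language.order.Formula (Fin 5))
    (E : Language.order.Formula (Fin 4)) (n : ℕ) : Language.order.Sentence :=
  ((atLevel A 0).imp (chain S E n 0)).alls

theorem computable_encode_reduction (A : Language.order.Formula (Fin 4))
    (S : Language.order.Formula (Fin 5)) (E : Language.order.Formula (Fin 4)) :
    Computable fun n => Encodable.encode (reduction A S E n) := by
  have hS : Primrec₂ fun _ i : ℕ => Encodable.encode (Sum.inr (Sum.inr 1) : Symbol) ::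
      Encodable.encode (Sum.inr (Sum.inr 0) : Symbol) :: symbolCodes (atLevel S (0 + i)) :=
    Primrec.list_cons.comp (.const _) (Primrec.list_cons.comp (.const _)
      ((primrec_symbolCodes_atLevel S).comp (Primrec.nat_add.comp (.const 0) .snd)))
  have hE : Primrec fun n => symbolCodes (atLevel E (0 + n)) :=
    (primrec_symbolCodes_atLevel E).comp (Primrec.nat_add.comp (.const 0) .id)
  have hchain : Primrec fun n => symbolCodes (chain S E n 0) :=
    (Primrec.list_append.comp (Primrec.list_flatMap Primrec.list_range hS) hE).of_eq
      fun n => (symbolCodes_chain S E n 0).symm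
  have hcons {f : ℕ → List ℕ} (a : ℕ) (hf : Primrec f) : Primrec fun n => a :: f n :=
    Primrec.list_cons.comp (.const a) hf
  have hall : Primrec fun n => symbolCodes (n := 0) (reduction A S E n) := by
    refine (hcons (Encodable.encode (Sum.inr (Sum.inr 1) : Symbol))
      (hcons (Encodable.encode (Sum.inr (Sum.inr 1) : Symbol))
      (hcons (Encodable.encode (Sum.inr (Sum.inr 1) : Symbol))
      (hcons (Encodable.encode (Sum.inr (Sum.inr 1) : Symbol))
      (hcons (Encodable.encode (Sum.inr (Sum.inr 0) : Symbol))
        (Primrec.list_append.comp (.const (symbolCodes (atLevel A 0))) hchain)))))).of_eq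
      fun n => ?_
    simp only [symbolCodes, ← List.map_append]
    rfl
  exact ((Primrec.encode.comp hall).of_eq fun n => (encode_sentence _).symm).to_comp

theorem realize_reduction {A : Language.order.Formula (Fin 4)}
    {S : Language.order.Formula (Fin 5)} {E : Language.order.Formula (Fin 4)}
    {F : Type v} [Lattice F]
    (hS : ∀ e : Fin 5 → F, S.Realize e ↔ Next (e 0) (e 1) (e 2) (e 4) (e 3))
    (hE : ∀ e : Fin 4 → F, E.Realize e ↔ ¬ e 3 = e 2) {n : ℕ} :
    F ⊨ reduction A S E n ↔
      ∀ y : Fin 4 → F, A.Realize y → ¬ Represents (y 0) (y 1) (y 2) n (y 3) := by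
  have hlevel (y : Fin 4 → F) (i : Fin 4) : y (levelIndex 4 0 i) = y i := by
    fin_cases i <;> rfl
  rw [Sentence.Realize, Formula.Realize, reduction]
  refine BoundedFormula.realize_alls.trans (forall_congr' fun y => ?_)
  rw [BoundedFormula.realize_imp]
  refine imp_congr ?_ (realize_chain hS hE (hlevel y))
  rw [realize_atLevel]
  exact iff_of_eq (congrArg _ (funext (hlevel y)))

theorem exists_reduction {f : ℕ →. ℕ} (hf : Partrec f) :
    ∃ φ : ℕ → Language.order.Sentence, (Computable fun n => Encodable.encode (φ n)) ∧
      ∀ n, (∀ (X : Type u) (F : Type v) [Lattice F] (ι : X → F),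
        Finite X → Nonempty X → IsFreeLatticeOn.{u, v, w} ι → F ⊨ φ n) ↔ ¬ (f n).Dom := by
  obtain ⟨R, hdef, hsound, hcomp⟩ :=
    expressible_of_partrec'.{v} (Nat.Partrec'.part_iff₁.2 hf)
  obtain ⟨A, hA⟩ : UDef.{v} fun F _ (e : Fin 4 → F) =>
      IsOrdered (e 0) (e 1) (e 2) ∧ ∃ y, R F (e 0) (e 1) (e 2) (fun _ => e 3) y :=
    .and (.isOrdered _ _ _) (.ex (hdef (Fin 4 ⊕ Unit) (.inl 0) (.inl 1) (.inl 2) (fun _ => .inl 3) (.inr ())))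
  obtain ⟨S, hS⟩ := UDef.next.{v} (0 : Fin 5) 1 2 4 3
  obtain ⟨E, hE⟩ := (UDef.eq.{v} (3 : Fin 4) 2).not
  refine ⟨reduction A S E, computable_encode_reduction A S E, fun n => ⟨fun h hn => ?_, ?_⟩⟩
  · obtain ⟨N, hN, hnN⟩ := ((hcomp (n ::ᵥ .nil) _ (Part.get_mem hn)).and
      (Filter.eventually_ge_atTop n)).exists
    obtain ⟨s, t, g, hg⟩ := Free.exists_isStandard.{v} N
    have h := (realize_reduction (hS _) (hE _)).1 (h (ULift.{u} (Fin (N + 1) × Fin 3)) _ _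
      inferInstance ⟨⟨0, 0⟩⟩ (Free.isFreeLatticeOn.{u, v, w} Equiv.ulift)) ![s, t, g 0, g n]
    have hget : (fun i => g ((n ::ᵥ List.Vector.nil).get i)) = fun _ => g n :=
      funext fun i => by simp [Subsingleton.elim i 0]
    have hR := hN _ s t g hg
    rw [hget] at hR
    exact h ((hA _ _).2 ⟨hg.isOrdered, _, hR⟩) (hg.represents hnN)
  · intro hn X F _ ι hX _ hι
    refine (realize_reduction (hS _) (hE _)).2 fun y hy hrep => hn ?_
    obtain ⟨hO, z, hz⟩ := (hA _ _).1 hy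
    obtain ⟨m, hm, -⟩ := hsound F _ _ _ hO (finite_doublyPrime hι) _ z (n ::ᵥ .nil)
      (fun i => by simpa using hrep) hz
    exact Part.dom_iff_mem.2 ⟨m, hm⟩

end FreeLatticeTheory

/-- **Theorem (Statement 1).** The common first-order theory of finitely generated free
lattices is undecidable: there is no computable function deciding, via the Gödel
encoding, whether a sentence in the language of posets is true in the free lattice on
`X` for every finite nonempty set `X`. -/
theorem theory_of_finitely_generated_free_lattices_undecidable :
    ¬ ∃ f : ℕ → Bool, Computable f ∧
      ∀ φ : Language.order.Sentence,
        f (Encodable.encode φ) = true ↔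
          ∀ (X : Type u) (F : Type v) [Lattice F] (ι : X → F),
            Finite X → Nonempty X → IsFreeLatticeOn.{u, v, w} ι → F ⊨ φ := by
  rintro ⟨f, hf, hfφ⟩
  have heval : Partrec fun n => Nat.Partrec.Code.eval (Denumerable.ofNat Nat.Partrec.Code n) 0 :=
    Nat.Partrec.Code.eval_part.comp (Computable.ofNat _) (Computable.const 0)
  obtain ⟨φ, hφ, h⟩ := FreeLatticeTheory.exists_reduction.{u, v, w} heval
  refine ComputablePred.halting_problem 0 (ComputablePred.computable_iff.2
    ⟨fun c => !f (Encodable.encode (φ (Encodable.encode c))),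
      Primrec.not.to_comp.comp (hf.comp (hφ.comp Computable.encode)), funext fun c => ?_⟩)
  have := (hfφ (φ (Encodable.encode c))).trans (h _)
  rw [Denumerable.ofNat_encode] at this
  simp only [Bool.not_eq_true', eq_iff_iff, ← Bool.not_eq_true]
  rw [this, not_not]
end
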